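/- Sharp norm estimate for coherent state transforms (Corollary 3.3): Let k > 1/2 and q ≥ 2 be real numbers with kq > 2, and set p = q + 1/k. Let f(ζ) = (1−|ζ|²)^k Φ(ζ) where Φ is holomorphic on D and ∫_D |f|² dν_k < ∞. Then ∫_D |f|^q dν_k ≥ ((2k−1)/(kq−1)) · ((kp−1)/(2k−1))^{q/p} · (∫_D |f|^p dν_k)^{q/p}. -/

import Mathlib

open MeasureTheory Metric

/-- The measure `ν_k` on the unit disc `D ⊆ ℂ`, with density
`((2k−1)/π)(1−|ζ|²)^{−2}` with respect to Lebesgue measure. -/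
noncomputable def nuMeasure (k : ℝ) : Measure ℂ :=
  (volume.restrict (ball (0 : ℂ) 1)).withDensity
    (fun ζ => ENNReal.ofReal ((2 * k - 1) / Real.pi * ((1 - ‖ζ‖ ^ 2) ^ 2)⁻¹))

/-!
Up to the factor `2k - 1`, `ν_k` is the Möbius-invariant measure `μ` of the disc. For a set `E` of
measure `A` and `g` supported in `E`, the Cauchy–Pompeiu formula corrected by a primitive of the
invariant density writes `-π (1 + A) ∫ g dμ` as the integral of `∂̄g / (1 - |ζ|²)` against the
`μ`-integral over `E` of the reciprocal of a disc automorphism depending on `ζ`. By comparison with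
preimages of half-planes the latter is at most `√(A + A²)` in modulus, which yields the inequality
`π (1 + A) |∫ g dμ| ≤ √(A + A²) ∫ |∂̄g| / (1 - |ζ|²)`.

Apply this to functions of `S = |f|²`. Off its zeros `log S` has constant invariant Laplacian `-2k`,
so that an integration by parts and Cauchy–Schwarz turn this inequality into one for the
distribution function `A(t) = μ {S ≥ t}`, namely that `t^(1/(2k)) (1 + A(t))` is nonincreasing as
long as `A(t) > 0`. Equality holds for `f = (1 - |ζ|²)^k`. Consequently `A` crosses the distribution
function of the extremal with the same `q`-th moment at most once, from above to below, and the
extremal has the larger `p`-th moment.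
-/

open ComplexConjugate Complex Topology

section Wirtinger

variable {F G : ℂ → ℂ} {z : ℂ}

/-- The Wirtinger derivative `∂F/∂z̄ = (∂F/∂x + i ∂F/∂y) / 2`. -/
noncomputable def dbar (F : ℂ → ℂ) (z : ℂ) : ℂ :=
  (fderiv ℝ F z 1 + I * fderiv ℝ F z I) / 2

lemma dbar_eq_of_hasFDerivAt {F' : ℂ →L[ℝ] ℂ} (hF : HasFDerivAt F F' z) :
    dbar F z = (F' 1 + I * F' I) / 2 := by
  rw [dbar, hF.fderiv]

lemma fderiv_apply_eq_re_add_im (F : ℂ → ℂ) (z v : ℂ) :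
    fderiv ℝ F z v = v.re * fderiv ℝ F z 1 + v.im * fderiv ℝ F z I := by
  have hv : v = v.re • (1 : ℂ) + v.im • I := by simp
  conv_lhs => rw [hv, map_add, map_smul, map_smul, real_smul, real_smul]

lemma fderiv_add_I_mul_fderiv (F : ℂ → ℂ) (z v : ℂ) :
    fderiv ℝ F z v + I * fderiv ℝ F z (I * v) = 2 * conj v * dbar F z := by
  rw [fderiv_apply_eq_re_add_im F z v, fderiv_apply_eq_re_add_im F z (I * v), dbar,
    ← re_add_im (conj v)]
  simp only [I_mul_re, I_mul_im, conj_re, conj_im, ofReal_neg]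
  linear_combination (v.im * fderiv ℝ F z I) * I_sq

lemma dbar_mul (hF : DifferentiableAt ℝ F z) (hG : DifferentiableAt ℝ G z) :
    dbar (fun w => F w * G w) z = dbar F z * G z + F z * dbar G z := by
  refine (dbar_eq_of_hasFDerivAt (hF.hasFDerivAt.mul hG.hasFDerivAt)).trans ?_
  simp only [add_apply, smul_apply, smul_eq_mul, dbar]
  ring

lemma dbar_sub (hF : DifferentiableAt ℝ F z) (hG : DifferentiableAt ℝ G z) :
    dbar (fun w => F w - G w) z = dbar F z - dbar G z := by
  refine (dbar_eq_of_hasFDerivAt (hF.hasFDerivAt.sub hG.hasFDerivAt)).trans ?_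
  simp only [sub_apply, dbar]
  ring

lemma dbar_eq_zero_of_differentiableAt (hF : DifferentiableAt ℂ F z) : dbar F z = 0 := by
  rw [dbar_eq_of_hasFDerivAt (hF.hasDerivAt.hasFDerivAt.restrictScalars ℝ)]
  simp [← mul_assoc]

lemma dbar_conj_comp (hF : DifferentiableAt ℂ F z) :
    dbar (fun w => conj (F w)) z = conj (deriv F z) := by
  refine (dbar_eq_of_hasFDerivAt (conjCLE.hasFDerivAt.comp z
    (hF.hasDerivAt.hasFDerivAt.restrictScalars ℝ))).trans ?_
  simp [← mul_assoc]

lemma dbar_comp_of_differentiableAt {f : ℂ → ℂ} (hf : DifferentiableAt ℂ f (F z))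
    (hF : DifferentiableAt ℝ F z) : dbar (fun w => f (F w)) z = deriv f (F z) * dbar F z := by
  refine (dbar_eq_of_hasFDerivAt
    ((hf.hasDerivAt.hasFDerivAt.restrictScalars ℝ).comp z hF.hasFDerivAt)).trans ?_
  simp only [ContinuousLinearMap.comp_apply, ContinuousLinearMap.coe_restrictScalars',
    ContinuousLinearMap.toSpanSingleton_apply, smul_eq_mul, dbar]
  ring

lemma dbar_ofReal {u : ℂ → ℝ} {u' : ℂ →L[ℝ] ℝ} (hu : HasFDerivAt u u' z) :
    dbar (fun w => (u w : ℂ)) z = (u' 1 + I * u' I) / 2 :=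
  dbar_eq_of_hasFDerivAt (ofRealCLM.hasFDerivAt.comp z hu)

lemma dbar_ofReal_comp {u : ℂ → ℝ} {h : ℝ → ℝ} (hh : DifferentiableAt ℝ h (u z))
    (hu : DifferentiableAt ℝ u z) :
    dbar (fun w => (h (u w) : ℂ)) z = deriv h (u z) * dbar (fun w => (u w : ℂ)) z := by
  refine (dbar_ofReal (hh.hasDerivAt.comp_hasFDerivAt z hu.hasFDerivAt)).trans ?_
  rw [dbar_ofReal hu.hasFDerivAt]
  simp only [smul_apply, smul_eq_mul, ofReal_mul]
  ring

lemma dbar_eq_zero_of_notMem_tsupport (hz : z ∉ tsupport F) : dbar F z = 0 := by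
  have hF : fderiv ℝ F z = 0 := by_contra fun h => hz (support_fderiv_subset ℝ h)
  simp [dbar, hF]

lemma continuous_dbar (hF : ContDiff ℝ 1 F) : Continuous (dbar F) := by
  have := hF.continuous_fderiv one_ne_zero
  unfold dbar
  fun_prop

lemma continuousAt_fderiv_apply (hF : ContDiffAt ℝ 1 F z) (v : ℂ) :
    ContinuousAt (fun w => fderiv ℝ F w v) z :=
  (hF.fderiv_right (m := 0) le_rfl).continuousAt.clm_apply continuousAt_const

end Wirtinger

section IntegrationByParts

variable {g φ : ℂ → ℂ}

lemma integrable_mul_of_continuousAt_tsupport {R : Type*} [NormedRing R] {g φ : ℂ → R}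
    (hg : Continuous g) (hgc : HasCompactSupport g) (hφ : ∀ z ∈ tsupport g, ContinuousAt φ z) :
    Integrable (fun z => φ z * g z) :=
  (continuous_of_tsupport fun z hz => (hφ z (tsupport_mul_subset_right hz)).mul
    hg.continuousAt).integrable_of_hasCompactSupport hgc.mul_left

lemma integrable_mul_fderiv_apply (hg : ContDiff ℝ 1 g) (hgc : HasCompactSupport g)
    (hφ : ∀ z ∈ tsupport g, ContinuousAt φ z) (v : ℂ) :
    Integrable (fun z => φ z * fderiv ℝ g z v) :=
  integrable_mul_of_continuousAt_tsupport ((hg.continuous_fderiv one_ne_zero).clm_apply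
    continuous_const) (hgc.fderiv_apply ℝ v)
    fun z hz => hφ z (tsupport_fderiv_apply_subset ℝ v hz)

lemma integral_mul_fderiv_eq_neg (hg : ContDiff ℝ 1 g) (hgc : HasCompactSupport g)
    (hφ : ∀ z ∈ tsupport g, ContDiffAt ℝ 1 φ z) (v : ℂ) :
    ∫ z, φ z * fderiv ℝ g z v = -∫ z, fderiv ℝ φ z v * g z :=
  integral_mul_fderiv_eq_neg_fderiv_mul_of_integrable
    (integrable_mul_of_continuousAt_tsupport hg.continuous hgc
      fun z hz => continuousAt_fderiv_apply (hφ z hz) v)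
    (integrable_mul_fderiv_apply hg hgc (fun z hz => (hφ z hz).continuousAt) v)
    (integrable_mul_of_continuousAt_tsupport hg.continuous hgc
      fun z hz => (hφ z hz).continuousAt)
    (fun z hz => (hφ z hz).differentiableAt one_ne_zero)
    fun z _ => hg.differentiable one_ne_zero z

lemma integral_mul_dbar_eq_neg (hg : ContDiff ℝ 1 g) (hgc : HasCompactSupport g)
    (hφ : ∀ z ∈ tsupport g, ContDiffAt ℝ 1 φ z) :
    ∫ z, φ z * dbar g z = -∫ z, dbar φ z * g z := by
  have hφ' := fun z hz => (hφ z hz).continuousAt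
  have hl := integrable_mul_fderiv_apply hg hgc hφ'
  have hr v := integrable_mul_of_continuousAt_tsupport hg.continuous hgc
    fun z hz => continuousAt_fderiv_apply (hφ z hz) v
  calc ∫ z, φ z * dbar g z
      = ∫ z, (2⁻¹ * (φ z * fderiv ℝ g z 1) + I / 2 * (φ z * fderiv ℝ g z I)) := by
        congr 1 with z; rw [dbar]; ring
    _ = -∫ z, (2⁻¹ * (fderiv ℝ φ z 1 * g z) + I / 2 * (fderiv ℝ φ z I * g z)) := by
        rw [integral_add ((hl 1).const_mul _) ((hl I).const_mul _),
          integral_add ((hr 1).const_mul _) ((hr I).const_mul _)]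
        simp only [integral_const_mul, integral_mul_fderiv_eq_neg hg hgc hφ]
        ring
    _ = -∫ z, dbar φ z * g z := by
        congr 2 with z; rw [dbar]; ring

end IntegrationByParts

section PolarCoordinates

variable {E : Type*} [NormedAddCommGroup E] [NormedSpace ℝ E]

lemma integral_eq_integral_circleMap (f : ℂ → E) (z : ℂ) :
    ∫ ζ, f ζ = ∫ p in Set.Ioi (0 : ℝ) ×ˢ Set.Ioo (-Real.pi) Real.pi,
      p.1 • f (circleMap z p.1 p.2) := by
  rw [← integral_add_left_eq_self f z, ← Complex.integral_comp_polarCoord_symm,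
    polarCoord_target]
  simp only [Complex.polarCoord_symm_apply, circleMap, exp_mul_I, ofReal_cos, ofReal_sin]

lemma hasDerivAt_circleMap_radius (z : ℂ) (r θ : ℝ) :
    HasDerivAt (fun r : ℝ => circleMap z r θ) (exp (θ * I)) r := by
  simpa [circleMap] using
    ((ofRealCLM.hasDerivAt (x := r)).mul_const (exp (θ * I))).const_add z

lemma continuous_uncurry_circleMap (z : ℂ) :
    Continuous fun p : ℝ × ℝ => circleMap z p.1 p.2 := by
  unfold circleMap
  fun_prop

end PolarCoordinates

section Pompeiu

variable {g : ℂ → ℂ}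

lemma integrableOn_fderiv_circleMap (hg : ContDiff ℝ 1 g) (hgc : HasCompactSupport g) (z : ℂ)
    {v : ℝ → ℂ} (hv : Continuous v) :
    IntegrableOn (fun p : ℝ × ℝ => fderiv ℝ g (circleMap z p.1 p.2) (v p.2))
      (Set.Ioi 0 ×ˢ Set.Ioo (-Real.pi) Real.pi) := by
  obtain ⟨R, hR⟩ := hgc.isBounded.subset_closedBall z
  have hcont : Continuous fun p : ℝ × ℝ => fderiv ℝ g (circleMap z p.1 p.2) (v p.2) :=
    ((hg.continuous_fderiv one_ne_zero).comp (continuous_uncurry_circleMap z)).clm_apply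
      (hv.comp continuous_snd)
  refine (hcont.continuousOn.integrableOn_compact
    ((isCompact_Icc (a := 0) (b := R)).prod (isCompact_Icc (a := -Real.pi)
      (b := Real.pi)))).of_forall_sdiff_eq_zero (measurableSet_Ioi.prod measurableSet_Ioo) ?_
  rintro ⟨r, θ⟩ ⟨⟨hr, hθ⟩, hrθ⟩
  have hrR : R < r := not_le.1 fun h => hrθ ⟨⟨hr.le, h⟩, Set.Ioo_subset_Icc_self hθ⟩
  have hnotMem : circleMap z r θ ∉ tsupport g := fun h => by
    have := mem_closedBall.1 (hR h)
    rw [dist_eq, circleMap_sub_center, norm_circleMap_zero] at this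
    exact (hrR.trans_le (le_abs_self r)).not_ge this
  have hzero : fderiv ℝ g (circleMap z r θ) = 0 :=
    by_contra fun h => hnotMem (support_fderiv_subset ℝ h)
  simp [hzero]

lemma integral_Ioi_fderiv_circleMap (hg : ContDiff ℝ 1 g) (hgc : HasCompactSupport g) (z : ℂ)
    (θ : ℝ) :
    ∫ r in Set.Ioi (0 : ℝ), fderiv ℝ g (circleMap z r θ) (exp (θ * I)) = -g z := by
  have hray : ContDiff ℝ 1 fun r : ℝ => g (circleMap z r θ) :=
    hg.comp (contDiff_const.add (ofRealCLM.contDiff.mul contDiff_const))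
  have hclosed : IsClosedEmbedding fun r : ℝ => circleMap z r θ :=
    (Isometry.of_dist_eq fun r s => by
      simp [circleMap, dist_eq, ← sub_mul, ← ofReal_sub, Real.dist_eq]).isClosedEmbedding
  have hderiv (r : ℝ) : deriv (fun r : ℝ => g (circleMap z r θ)) r =
      fderiv ℝ g (circleMap z r θ) (exp (θ * I)) :=
    ((hg.differentiable one_ne_zero _).hasFDerivAt.comp_hasDerivAt r
      (hasDerivAt_circleMap_radius z r θ)).deriv
  have hint := HasCompactSupport.integral_Ioi_deriv_eq hray (hgc.comp_isClosedEmbedding hclosed) 0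
  simpa only [hderiv, circleMap_zero_radius, Function.const_apply] using hint

lemma integral_Ioo_fderiv_circleMap (hg : ContDiff ℝ 1 g) (z : ℂ) {r : ℝ} (hr : r ≠ 0) :
    ∫ θ in Set.Ioo (-Real.pi) Real.pi, fderiv ℝ g (circleMap z r θ) (I * exp (θ * I)) = 0 := by
  have hderiv (θ : ℝ) : HasDerivAt (fun θ => g (circleMap z r θ))
      (r * fderiv ℝ g (circleMap z r θ) (I * exp (θ * I))) θ := by
    refine ((hg.differentiable one_ne_zero _).hasFDerivAt.comp_hasDerivAt θ
      (hasDerivAt_circleMap z r θ)).congr_deriv ?_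
    rw [← real_smul, ← map_smul, real_smul, circleMap_zero]
    congr 1
    ring
  have hcont : Continuous fun θ : ℝ => r * fderiv ℝ g (circleMap z r θ) (I * exp (θ * I)) := by
    have := hg.continuous_fderiv one_ne_zero
    fun_prop
  have hends : circleMap z r (-Real.pi) = circleMap z r Real.pi := by
    simp [circleMap, exp_neg]
  have hint := intervalIntegral.integral_eq_sub_of_hasDerivAt (fun θ _ => hderiv θ)
    (hcont.intervalIntegrable (-Real.pi) Real.pi)
  rw [hends, sub_self, intervalIntegral.integral_const_mul,
    intervalIntegral.integral_of_le (by linarith [Real.pi_pos]), integral_Ioc_eq_integral_Ioo]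
    at hint
  exact (mul_eq_zero.1 hint).resolve_left (ofReal_ne_zero.2 hr)

theorem integral_dbar_div_sub (hg : ContDiff ℝ 1 g) (hgc : HasCompactSupport g) (z : ℂ) :
    ∫ ζ, dbar g ζ / (ζ - z) = -Real.pi * g z := by
  set P := Set.Ioi (0 : ℝ) ×ˢ Set.Ioo (-Real.pi) Real.pi
  have hradial := integrableOn_fderiv_circleMap hg hgc z (v := fun θ => exp (θ * I)) (by fun_prop)
  have hangular := integrableOn_fderiv_circleMap hg hgc z (v := fun θ => I * exp (θ * I))
    (by fun_prop)
  have hsplit : ∀ p ∈ P, p.1 • (dbar g (circleMap z p.1 p.2) / (circleMap z p.1 p.2 - z)) =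
      2⁻¹ * (fderiv ℝ g (circleMap z p.1 p.2) (exp (p.2 * I)) +
        I * fderiv ℝ g (circleMap z p.1 p.2) (I * exp (p.2 * I))) := by
    rintro ⟨r, θ⟩ ⟨hr, -⟩
    have hr' : (r : ℂ) ≠ 0 := ofReal_ne_zero.2 (ne_of_gt hr)
    have hconj : conj (exp (θ * I)) = (exp (θ * I))⁻¹ := by
      rw [inv_def, normSq_eq_norm_sq, norm_exp_ofReal_mul_I]; simp
    rw [fderiv_add_I_mul_fderiv, circleMap_sub_center, circleMap_zero, hconj, real_smul]
    field_simp
  have hradial_eq : ∫ p in P, fderiv ℝ g (circleMap z p.1 p.2) (exp (p.2 * I)) =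
      -(2 * Real.pi) * g z := by
    rw [Measure.volume_eq_prod, ← Measure.prod_restrict, integral_prod_symm _
      (by rwa [Measure.prod_restrict])]
    simp only [integral_Ioi_fderiv_circleMap hg hgc]
    rw [setIntegral_const, Real.volume_real_Ioo_of_le (by linarith [Real.pi_pos]), real_smul]
    push_cast
    ring
  have hangular_eq : ∫ p in P, fderiv ℝ g (circleMap z p.1 p.2) (I * exp (p.2 * I)) = 0 := by
    rw [Measure.volume_eq_prod, setIntegral_prod _ hangular]
    exact setIntegral_eq_zero_of_forall_eq_zero fun r hr =>
      integral_Ioo_fderiv_circleMap hg z (ne_of_gt hr)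
  rw [integral_eq_integral_circleMap _ z,
    setIntegral_congr_fun (measurableSet_Ioi.prod measurableSet_Ioo) hsplit,
    integral_const_mul, integral_add hradial (hangular.const_mul I), integral_const_mul,
    hradial_eq, hangular_eq]
  ring

end Pompeiu

section MeanValue

variable {E : Type*} [NormedAddCommGroup E] [NormedSpace ℂ E] [CompleteSpace E]
  {Φ : ℂ → E} {z : ℂ} {δ : ℝ}

lemma integral_Ioo_circleMap_of_diffContOnCl {r : ℝ} (hΦ : DiffContOnCl ℂ Φ (ball z |r|)) :
    ∫ θ in Set.Ioo (-Real.pi) Real.pi, Φ (circleMap z r θ) = (2 * Real.pi) • Φ z := by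
  have hper : Function.Periodic (fun θ => Φ (circleMap z r θ)) (2 * Real.pi) := fun θ => by
    simp only [periodic_circleMap z r θ]
  have hshift := hper.intervalIntegral_add_eq (-Real.pi) 0
  rw [zero_add, show -Real.pi + 2 * Real.pi = Real.pi by ring] at hshift
  rw [← integral_Ioc_eq_integral_Ioo, ← intervalIntegral.integral_of_le
    (by linarith [Real.pi_pos]), hshift, ← hΦ.circleAverage, Real.circleAverage, smul_smul,
    mul_inv_cancel₀ Real.two_pi_pos.ne', one_smul]

theorem setIntegral_ball_of_diffContOnCl (hδ : 0 ≤ δ) (hΦ : DiffContOnCl ℂ Φ (ball z δ)) :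
    ∫ ζ in ball z δ, Φ ζ = (Real.pi * δ ^ 2) • Φ z := by
  have hpolar : ∀ p ∈ Set.Ioi (0 : ℝ) ×ˢ Set.Ioo (-Real.pi) Real.pi,
      p.1 • (ball z δ).indicator Φ (circleMap z p.1 p.2) =
        (Set.Iio δ ×ˢ Set.univ).indicator (fun p : ℝ × ℝ => p.1 • Φ (circleMap z p.1 p.2)) p := by
    rintro ⟨r, θ⟩ ⟨hr, -⟩
    simp [Set.indicator, dist_eq, circleMap_sub_center, abs_of_pos (Set.mem_Ioi.1 hr)]
  have hcont : ContinuousOn (fun p : ℝ × ℝ => p.1 • Φ (circleMap z p.1 p.2))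
      (Set.Icc 0 δ ×ˢ Set.Icc (-Real.pi) Real.pi) :=
    continuousOn_fst.smul (hΦ.continuousOn_ball.comp (continuous_uncurry_circleMap z).continuousOn
      fun p hp => by simpa [dist_eq, circleMap_sub_center, abs_of_nonneg hp.1.1] using hp.1.2)
  have hint : IntegrableOn (fun p : ℝ × ℝ => p.1 • Φ (circleMap z p.1 p.2))
      (Set.Ioo 0 δ ×ˢ Set.Ioo (-Real.pi) Real.pi) :=
    (hcont.integrableOn_compact (isCompact_Icc.prod isCompact_Icc)).mono_set
      (Set.prod_mono Set.Ioo_subset_Icc_self Set.Ioo_subset_Icc_self)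
  have hcircle : ∀ r ∈ Set.Ioo 0 δ, ∫ θ in Set.Ioo (-Real.pi) Real.pi, r • Φ (circleMap z r θ) =
      r • (2 * Real.pi) • Φ z := fun r hr => by
    rw [integral_smul, integral_Ioo_circleMap_of_diffContOnCl]
    exact hΦ.mono (ball_subset_ball (by rw [abs_of_pos hr.1]; exact hr.2.le))
  rw [← integral_indicator measurableSet_ball, integral_eq_integral_circleMap _ z,
    setIntegral_congr_fun (measurableSet_Ioi.prod measurableSet_Ioo) hpolar,
    setIntegral_indicator (measurableSet_Iio.prod MeasurableSet.univ), Set.prod_inter_prod,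
    Set.Ioi_inter_Iio, Set.inter_univ, Measure.volume_eq_prod, setIntegral_prod _ hint,
    setIntegral_congr_fun measurableSet_Ioo hcircle, integral_smul_const,
    ← integral_Ioc_eq_integral_Ioo, ← intervalIntegral.integral_of_le hδ, integral_id, smul_smul]
  congr 1
  ring

end MeanValue

section HyperbolicMeasure

/-- The density `π⁻¹ (1 - |z|²)⁻²` of the Möbius-invariant measure, on the unit disc and on its
exterior alike; on the unit circle it has the junk value `0`. -/
noncomputable def hyperbolicDensity (z : ℂ) : ℝ := Real.pi⁻¹ * ((1 - ‖z‖ ^ 2) ^ 2)⁻¹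

/-- The Möbius-invariant measure `π⁻¹ (1 - |z|²)⁻² dA` on the unit disc, extended by zero to `ℂ`.
It is `ν_k` up to the factor `2k - 1`. -/
noncomputable def hyperbolicMeasure : Measure ℂ :=
  (volume.restrict (ball (0 : ℂ) 1)).withDensity fun z => ENNReal.ofReal (hyperbolicDensity z)

variable {E : Type*} [NormedAddCommGroup E] [NormedSpace ℝ E] {F : ℂ → E} {s : Set ℂ}

lemma hyperbolicDensity_nonneg (z : ℂ) : 0 ≤ hyperbolicDensity z := by
  unfold hyperbolicDensity
  have := Real.pi_pos
  positivity

lemma measurable_hyperbolicDensity : Measurable hyperbolicDensity := by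
  unfold hyperbolicDensity
  fun_prop

lemma one_sub_norm_sq_pos {z : ℂ} (hz : z ∈ ball (0 : ℂ) 1) : 0 < 1 - ‖z‖ ^ 2 := by
  nlinarith [mem_ball_zero_iff.1 hz, norm_nonneg z]

lemma continuousOn_hyperbolicDensity : ContinuousOn hyperbolicDensity (ball 0 1) :=
  continuousOn_const.mul (ContinuousOn.inv₀ (by fun_prop)
    fun _ hz => (pow_pos (one_sub_norm_sq_pos hz) 2).ne')

lemma nuMeasure_eq_smul_hyperbolicMeasure {k : ℝ} (hk : 1 / 2 ≤ k) :
    nuMeasure k = ENNReal.ofReal (2 * k - 1) • hyperbolicMeasure := by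
  rw [nuMeasure, hyperbolicMeasure,
    ← withDensity_smul _ measurable_hyperbolicDensity.ennreal_ofReal]
  congr 1 with z
  rw [Pi.smul_apply, smul_eq_mul, ← ENNReal.ofReal_mul (by linarith), hyperbolicDensity,
    div_eq_mul_inv, mul_assoc]

lemma hyperbolicMeasure_absolutelyContinuous : hyperbolicMeasure ≪ volume :=
  (withDensity_absolutelyContinuous _ _).trans Measure.restrict_le_self.absolutelyContinuous

instance : NullSingletonClass hyperbolicMeasure :=
  ⟨fun z => hyperbolicMeasure_absolutelyContinuous (measure_singleton z)⟩

lemma ae_hyperbolicMeasure_mem_ball : ∀ᵐ z ∂hyperbolicMeasure, z ∈ ball (0 : ℂ) 1 :=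
  withDensity_absolutelyContinuous _ _ (ae_restrict_mem measurableSet_ball)

lemma restrict_hyperbolicMeasure (hs : MeasurableSet s) (hsb : s ⊆ ball 0 1) :
    hyperbolicMeasure.restrict s =
      (volume.restrict s).withDensity fun z => ENNReal.ofReal (hyperbolicDensity z) := by
  rw [hyperbolicMeasure, restrict_withDensity hs, Measure.restrict_restrict hs,
    Set.inter_eq_left.2 hsb]

lemma setIntegral_hyperbolicMeasure (hs : MeasurableSet s) (hsb : s ⊆ ball 0 1) (F : ℂ → E) :
    ∫ z in s, F z ∂hyperbolicMeasure = ∫ z in s, hyperbolicDensity z • F z := by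
  rw [restrict_hyperbolicMeasure hs hsb, integral_withDensity_eq_integral_toReal_smul
    measurable_hyperbolicDensity.ennreal_ofReal (by simp)]
  simp only [ENNReal.toReal_ofReal (hyperbolicDensity_nonneg _)]

lemma integrableOn_hyperbolicMeasure_iff (hs : MeasurableSet s) (hsb : s ⊆ ball 0 1) :
    IntegrableOn F s hyperbolicMeasure ↔ IntegrableOn (fun z => hyperbolicDensity z • F z) s := by
  rw [IntegrableOn, restrict_hyperbolicMeasure hs hsb, integrable_withDensity_iff_integrable_smul'
    measurable_hyperbolicDensity.ennreal_ofReal (by simp)]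
  simp only [ENNReal.toReal_ofReal (hyperbolicDensity_nonneg _), IntegrableOn]

lemma integral_hyperbolicMeasure (hF : Function.support F ⊆ ball 0 1) :
    ∫ z, F z ∂hyperbolicMeasure = ∫ z, hyperbolicDensity z • F z := by
  rw [← setIntegral_eq_integral_of_forall_compl_eq_zero fun z hz =>
      Function.notMem_support.1 fun h => hz (hF h),
    setIntegral_hyperbolicMeasure measurableSet_ball subset_rfl,
    setIntegral_eq_integral_of_forall_compl_eq_zero fun z hz => by
      rw [Function.notMem_support.1 fun h => hz (hF h), smul_zero]]

lemma integrable_hyperbolicMeasure_of_hasCompactSupport (hF : Continuous F)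
    (hFc : HasCompactSupport F) (hFb : tsupport F ⊆ ball 0 1) : Integrable F hyperbolicMeasure := by
  rw [← integrableOn_iff_integrable_of_support_subset (subset_tsupport F),
    integrableOn_hyperbolicMeasure_iff hFc.measurableSet hFb]
  exact ((continuousOn_hyperbolicDensity.mono hFb).smul hF.continuousOn).integrableOn_compact hFc

lemma hyperbolicMeasure_lt_top_of_isCompact (hs : IsCompact s) (hsb : s ⊆ ball 0 1) :
    hyperbolicMeasure s < ⊤ := by
  have h : IntegrableOn (fun _ => (1 : ℝ)) s hyperbolicMeasure := by
    rw [integrableOn_hyperbolicMeasure_iff hs.measurableSet hsb]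
    exact ((continuousOn_hyperbolicDensity.mono hsb).smul
      continuousOn_const).integrableOn_compact hs
  simpa [integrableOn_const_iff] using h

end HyperbolicMeasure

section Potential

/-- The function `z̄ / (1 - |z|²)`, a `∂̄`-primitive of `(1 - |z|²)⁻²` on the unit disc. -/
noncomputable def hyperbolicPotential (z : ℂ) : ℂ := conj z * (1 - z * conj z)⁻¹

variable {z : ℂ}

lemma one_sub_mul_conj (z : ℂ) : 1 - z * conj z = (1 - ‖z‖ ^ 2 : ℝ) := by
  rw [mul_conj, normSq_eq_norm_sq, ofReal_sub, ofReal_one]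

lemma one_sub_mul_conj_ne_zero (hz : z ∈ ball (0 : ℂ) 1) : 1 - z * conj z ≠ 0 := by
  rw [one_sub_mul_conj]
  exact ofReal_ne_zero.2 (one_sub_norm_sq_pos hz).ne'

lemma contDiff_conj {n : WithTop ℕ∞} : ContDiff ℝ n (conj : ℂ → ℂ) := conjCLE.contDiff

lemma contDiff_one_sub_mul_conj {n : WithTop ℕ∞} : ContDiff ℝ n fun w : ℂ => 1 - w * conj w :=
  contDiff_const.sub (contDiff_id.mul contDiff_conj)

lemma contDiffAt_hyperbolicPotential {n : WithTop ℕ∞} (hz : z ∈ ball (0 : ℂ) 1) :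
    ContDiffAt ℝ n hyperbolicPotential z :=
  contDiff_conj.contDiffAt.mul (contDiff_one_sub_mul_conj.contDiffAt.inv
    (one_sub_mul_conj_ne_zero hz))

lemma dbar_conj (z : ℂ) : dbar conj z = 1 := by
  simpa using dbar_conj_comp (differentiableAt_id (𝕜 := ℂ) (x := z))

lemma dbar_one_sub_mul_conj (z : ℂ) : dbar (fun w => 1 - w * conj w) z = -z := by
  have hconj := (contDiff_conj (n := 1)).differentiable one_ne_zero z
  rw [dbar_sub (differentiableAt_const 1) (differentiableAt_fun_id.fun_mul hconj),
    dbar_eq_zero_of_differentiableAt (differentiableAt_const 1),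
    dbar_mul differentiableAt_fun_id hconj,
    dbar_eq_zero_of_differentiableAt differentiableAt_fun_id, dbar_conj]
  ring

lemma dbar_hyperbolicPotential (hz : z ∈ ball (0 : ℂ) 1) :
    dbar hyperbolicPotential z = Real.pi * hyperbolicDensity z := by
  have hne := one_sub_mul_conj_ne_zero hz
  have hden := (contDiff_one_sub_mul_conj (n := 1)).differentiable one_ne_zero z
  have hconj := (contDiff_conj (n := 1)).differentiable one_ne_zero z
  refine (dbar_mul hconj (hden.fun_inv hne)).trans ?_
  rw [dbar_comp_of_differentiableAt (f := Inv.inv)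
      (F := fun w => 1 - w * conj w) (differentiableAt_inv hne) hden,
    dbar_conj, dbar_one_sub_mul_conj, deriv_inv, hyperbolicDensity, ofReal_mul, ofReal_inv,
    ofReal_inv, ofReal_pow, ← one_sub_mul_conj,
    mul_inv_cancel_left₀ (ofReal_ne_zero.2 Real.pi_ne_zero)]
  field_simp
  ring

end Potential

section HalfPlane

lemma tendsto_div_one_add_sq_cobounded :
    Filter.Tendsto (fun t : ℝ => t / (1 + t ^ 2)) (Bornology.cobounded ℝ) (𝓝 0) := by
  refine squeeze_zero_norm' ?_ (tendsto_zero_iff_norm_tendsto_zero.1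
    (Filter.tendsto_inv₀_cobounded (α := ℝ)))
  filter_upwards [Bornology.eventually_ne_cobounded (0 : ℝ)] with t ht
  rw [norm_div, norm_inv, Real.norm_of_nonneg (by positivity : 0 ≤ 1 + t ^ 2), div_le_iff₀
    (by positivity), Real.norm_eq_abs, inv_mul_eq_div, le_div_iff₀ (abs_pos.2 ht), ← sq, sq_abs]
  linarith

lemma hasDerivAt_div_one_add_sq (t : ℝ) :
    HasDerivAt (fun t : ℝ => t / (1 + t ^ 2)) (2 * ((1 + t ^ 2) ^ 2)⁻¹ - (1 + t ^ 2)⁻¹) t := by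
  have hne : 1 + t ^ 2 ≠ 0 := by positivity
  refine ((hasDerivAt_id t).div ((hasDerivAt_pow 2 t).const_add 1) hne).congr_deriv ?_
  simp only [id_eq]
  field_simp
  ring

lemma integrable_inv_one_add_sq_sq : Integrable fun t : ℝ => ((1 + t ^ 2) ^ 2)⁻¹ := by
  refine integrable_inv_one_add_sq.mono' (by fun_prop) (.of_forall fun t => ?_)
  rw [Real.norm_of_nonneg (by positivity)]
  exact inv_anti₀ (by positivity) (le_self_pow₀ (by nlinarith [sq_nonneg t]) two_ne_zero)

lemma integral_univ_inv_one_add_sq_sq : ∫ t : ℝ, ((1 + t ^ 2) ^ 2)⁻¹ = Real.pi / 2 := by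
  have hzero := integral_of_hasDerivAt_of_tendsto hasDerivAt_div_one_add_sq
    ((integrable_inv_one_add_sq_sq.const_mul 2).sub integrable_inv_one_add_sq)
    (tendsto_div_one_add_sq_cobounded.mono_left IsOrderBornology.atBot_le_cobounded)
    (tendsto_div_one_add_sq_cobounded.mono_left IsOrderBornology.atTop_le_cobounded)
  rw [integral_sub (integrable_inv_one_add_sq_sq.const_mul 2) integrable_inv_one_add_sq,
    integral_const_mul, integral_univ_inv_one_add_sq] at hzero
  linarith

lemma lintegral_inv_sq_add_sq_sq {b : ℝ} (hb : 0 < b) :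
    ∫⁻ y : ℝ, ENNReal.ofReal ((b ^ 2 + y ^ 2) ^ 2)⁻¹ = ENNReal.ofReal (Real.pi / (2 * b ^ 3)) := by
  have hscale : (fun y : ℝ => ((b ^ 2 + y ^ 2) ^ 2)⁻¹) =
      fun y => (b ^ 4)⁻¹ * ((1 + (y / b) ^ 2) ^ 2)⁻¹ := by
    ext y
    field_simp
  have hint : Integrable fun y : ℝ => ((b ^ 2 + y ^ 2) ^ 2)⁻¹ := by
    rw [hscale]
    exact (integrable_inv_one_add_sq_sq.comp_div hb.ne').const_mul _
  rw [← ofReal_integral_eq_lintegral_ofReal hint (.of_forall fun y => by positivity), hscale,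
    integral_const_mul, Measure.integral_comp_div (fun t : ℝ => ((1 + t ^ 2) ^ 2)⁻¹) b,
    integral_univ_inv_one_add_sq_sq, abs_of_pos hb, smul_eq_mul]
  congr 1
  field_simp

variable {c x : ℝ}

lemma lintegral_hyperbolicDensity_vertical (hx : 1 < x) :
    ∫⁻ y : ℝ, ENNReal.ofReal (hyperbolicDensity (x + y * I)) =
      ENNReal.ofReal (2 * √(x ^ 2 - 1) ^ 3)⁻¹ := by
  have hb : 0 < √(x ^ 2 - 1) := Real.sqrt_pos.2 (by nlinarith)
  have hdensity (y : ℝ) : ENNReal.ofReal (hyperbolicDensity (x + y * I)) =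
      ENNReal.ofReal Real.pi⁻¹ * ENNReal.ofReal ((√(x ^ 2 - 1) ^ 2 + y ^ 2) ^ 2)⁻¹ := by
    rw [← ENNReal.ofReal_mul (inv_nonneg.2 Real.pi_nonneg), hyperbolicDensity,
      ← normSq_eq_norm_sq, normSq_add_mul_I, Real.sq_sqrt (by nlinarith),
      show (1 - (x ^ 2 + y ^ 2)) ^ 2 = (x ^ 2 - 1 + y ^ 2) ^ 2 by ring]
  simp only [hdensity]
  rw [lintegral_const_mul' _ _ ENNReal.ofReal_ne_top, lintegral_inv_sq_add_sq_sq hb,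
    ← ENNReal.ofReal_mul (inv_nonneg.2 Real.pi_nonneg)]
  congr 1
  field_simp

lemma hasDerivAt_mul_sub_one_div_sqrt (hx : 1 < x) (c : ℝ) :
    HasDerivAt (fun x => (c * x - 1) / (2 * √(x ^ 2 - 1)))
      ((x - c) * (2 * √(x ^ 2 - 1) ^ 3)⁻¹) x := by
  have hpos : 0 < x ^ 2 - 1 := by nlinarith
  have : 0 < √(x ^ 2 - 1) := Real.sqrt_pos.2 hpos
  refine ((((hasDerivAt_id x).const_mul c).sub_const 1).div
    ((((hasDerivAt_pow 2 x).sub_const 1).sqrt hpos.ne').const_mul 2)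
    (by positivity)).congr_deriv ?_
  have hsq := Real.sq_sqrt hpos.le
  simp only [id_eq]
  field_simp
  rw [hsq]
  ring

lemma tendsto_mul_sub_one_div_sqrt (c : ℝ) :
    Filter.Tendsto (fun x => (c * x - 1) / (2 * √(x ^ 2 - 1))) Filter.atTop (𝓝 (c / 2)) := by
  have hinv := tendsto_inv_atTop_zero (𝕜 := ℝ)
  have hlim : Filter.Tendsto (fun x : ℝ => (c - x⁻¹) / (2 * √(1 - x⁻¹ ^ 2))) Filter.atTop
      (𝓝 ((c - 0) / (2 * √(1 - 0 ^ 2)))) :=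
    (tendsto_const_nhds.sub hinv).div
      ((tendsto_const_nhds.sub (hinv.pow 2)).sqrt.const_mul 2) (by simp)
  rw [sub_zero, zero_pow two_ne_zero, sub_zero, Real.sqrt_one, mul_one] at hlim
  refine hlim.congr' ?_
  filter_upwards [Filter.eventually_gt_atTop 1] with x hx
  have hx0 : 0 < x := one_pos.trans hx
  have hsqrt : 0 < √(x ^ 2 - 1) := Real.sqrt_pos.2 (by nlinarith)
  rw [show 1 - x⁻¹ ^ 2 = (x ^ 2 - 1) / x ^ 2 by field_simp, Real.sqrt_div (by nlinarith),
    Real.sqrt_sq hx0.le]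
  field_simp

lemma lintegral_Ioi_sub_mul_inv_sqrt_pow_three (hc : 1 < c) :
    ∫⁻ x in Set.Ioi c, ENNReal.ofReal ((x - c) * (2 * √(x ^ 2 - 1) ^ 3)⁻¹) =
      ENNReal.ofReal ((c - √(c ^ 2 - 1)) / 2) := by
  have hderiv (x : ℝ) (hx : x ∈ Set.Ici c) :=
    hasDerivAt_mul_sub_one_div_sqrt (hc.trans_le hx) c
  have hnonneg (x : ℝ) (hx : x ∈ Set.Ioi c) : 0 ≤ (x - c) * (2 * √(x ^ 2 - 1) ^ 3)⁻¹ :=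
    mul_nonneg (sub_nonneg.2 (le_of_lt hx)) (by positivity)
  have hlim := tendsto_mul_sub_one_div_sqrt c
  rw [← ofReal_integral_eq_lintegral_ofReal
      (integrableOn_Ioi_deriv_of_nonneg' hderiv hnonneg hlim)
      (ae_restrict_of_forall_mem measurableSet_Ioi hnonneg),
    integral_Ioi_of_hasDerivAt_of_nonneg' hderiv hnonneg hlim]
  have hpos : 0 < c ^ 2 - 1 := by nlinarith
  have : 0 < √(c ^ 2 - 1) := Real.sqrt_pos.2 hpos
  have hsq := Real.sq_sqrt hpos.le
  congr 1
  field_simp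
  linear_combination hsq

lemma lintegral_hyperbolicDensity_halfPlane (hc : 1 < c) :
    ∫⁻ u : ℂ, ENNReal.ofReal (hyperbolicDensity u) * ENNReal.ofReal (u.re - c) =
      ENNReal.ofReal ((c - √(c ^ 2 - 1)) / 2) := by
  rw [← lintegral_Ioi_sub_mul_inv_sqrt_pow_three hc, ← lintegral_indicator measurableSet_Ioi,
    ← Complex.volume_preserving_equiv_real_prod.symm.lintegral_comp_emb
      Complex.measurableEquivRealProd.symm.measurableEmbedding, Measure.volume_eq_prod,
    lintegral_prod]
  · congr 1 with x
    simp only [measurableEquivRealProd_symm_apply, ← re_add_im (Complex.mk x _), add_re, ofReal_re,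
      mul_re, I_re, mul_zero, ofReal_im, I_im, mul_one, sub_self, add_zero]
    rw [lintegral_mul_const' _ _ ENNReal.ofReal_ne_top]
    by_cases hx : x ∈ Set.Ioi c
    · rw [lintegral_hyperbolicDensity_vertical (hc.trans (Set.mem_Ioi.1 hx)),
        Set.indicator_of_mem hx, ENNReal.ofReal_mul (sub_pos.2 (Set.mem_Ioi.1 hx)).le, mul_comm]
    · rw [Set.indicator_of_notMem hx, ENNReal.ofReal_of_nonpos (by linarith [Set.notMem_Ioi.1 hx]),
        mul_zero]
  · have hmeas : Measurable fun u : ℂ =>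
        ENNReal.ofReal (hyperbolicDensity u) * ENNReal.ofReal (u.re - c) :=
      measurable_hyperbolicDensity.ennreal_ofReal.mul (by fun_prop)
    exact (hmeas.comp measurableEquivRealProd.symm.measurable).aemeasurable

end HalfPlane

section Bathtub

/-- The kernel `(1 - ζ̄ z) / (ζ - z)`, the reciprocal of a disc automorphism as a function of `z`:
it maps the disc into the exterior of the disc and preserves the hyperbolic density. -/
noncomputable def discKernel (ζ z : ℂ) : ℂ := (1 - conj ζ * z) / (ζ - z)

variable {ζ z : ℂ} {c : ℝ} {E : Set ℂ}

lemma measurable_discKernel (ζ : ℂ) : Measurable (discKernel ζ) := by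
  unfold discKernel
  fun_prop

lemma norm_sq_one_sub_conj_mul (ζ z : ℂ) :
    ‖1 - conj ζ * z‖ ^ 2 = ‖ζ - z‖ ^ 2 + (1 - ‖ζ‖ ^ 2) * (1 - ‖z‖ ^ 2) := by
  simp only [Complex.sq_norm, normSq_apply, sub_re, sub_im, mul_re, mul_im, one_re, one_im,
    conj_re, conj_im]
  ring

lemma norm_sq_discKernel (hz : z ≠ ζ) :
    ‖discKernel ζ z‖ ^ 2 = 1 + (1 - ‖ζ‖ ^ 2) * (1 - ‖z‖ ^ 2) / ‖ζ - z‖ ^ 2 := by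
  have hne : ‖ζ - z‖ ^ 2 ≠ 0 := pow_ne_zero 2 (norm_ne_zero_iff.2 (sub_ne_zero.2 hz.symm))
  rw [discKernel, norm_div, div_pow, norm_sq_one_sub_conj_mul, add_div, div_self hne]

lemma hasDerivAt_discKernel (hz : z ≠ ζ) :
    HasDerivAt (discKernel ζ) ((1 - ζ * conj ζ) / (ζ - z) ^ 2) z := by
  refine ((((hasDerivAt_id z).const_mul (conj ζ)).const_sub 1).div
    ((hasDerivAt_id z).const_sub ζ) (sub_ne_zero.2 hz.symm)).congr_deriv ?_
  simp only [id_eq]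
  ring

lemma injOn_discKernel (hζ : ζ ∈ ball (0 : ℂ) 1) : Set.InjOn (discKernel ζ) {ζ}ᶜ := by
  intro z hz w hw h
  rw [discKernel, discKernel, div_eq_div_iff (sub_ne_zero.2 (Ne.symm hz))
    (sub_ne_zero.2 (Ne.symm hw))] at h
  have hmul : (1 - ζ * conj ζ) * (z - w) = 0 := by linear_combination h
  exact sub_eq_zero.1 ((mul_eq_zero.1 hmul).resolve_left (one_sub_mul_conj_ne_zero hζ))

lemma det_restrictScalars_toSpanSingleton (a : ℂ) :
    ((ContinuousLinearMap.toSpanSingleton ℂ a).restrictScalars ℝ : ℂ →L[ℝ] ℂ).det = ‖a‖ ^ 2 := by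
  have hmap : (((ContinuousLinearMap.toSpanSingleton ℂ a).restrictScalars ℝ : ℂ →L[ℝ] ℂ) :
      ℂ →ₗ[ℝ] ℂ) = (LinearMap.toSpanSingleton ℂ ℂ a).restrictScalars ℝ := by
    ext
    simp
  rw [ContinuousLinearMap.det, hmap, LinearMap.det_restrictScalars, ← normSq_eq_norm_sq,
    ← Algebra.norm_complex_apply, LinearMap.det_ring, LinearMap.toSpanSingleton_apply, one_smul]

lemma norm_sq_deriv_mul_hyperbolicDensity_discKernel (hζ : ζ ∈ ball (0 : ℂ) 1)
    (hz : z ∈ ball (0 : ℂ) 1) (hzζ : z ≠ ζ) :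
    ‖(1 - ζ * conj ζ) / (ζ - z) ^ 2‖ ^ 2 * hyperbolicDensity (discKernel ζ z) =
      hyperbolicDensity z := by
  have hne : ‖ζ - z‖ ≠ 0 := norm_ne_zero_iff.2 (sub_ne_zero.2 hzζ.symm)
  have hζpos := one_sub_norm_sq_pos hζ
  have hzpos := one_sub_norm_sq_pos hz
  rw [hyperbolicDensity, hyperbolicDensity, norm_sq_discKernel hzζ, one_sub_mul_conj, norm_div,
    norm_pow, norm_real, Real.norm_of_nonneg hζpos.le]
  field_simp
  ring

lemma lintegral_comp_discKernel_le (hζ : ζ ∈ ball (0 : ℂ) 1) {F : ℂ → ENNReal}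
    (hF : Measurable F) :
    ∫⁻ z, F (discKernel ζ z) ∂hyperbolicMeasure ≤
      ∫⁻ u, ENNReal.ofReal (hyperbolicDensity u) * F u := by
  set s : Set ℂ := ball 0 1 \ {ζ}
  have hs : MeasurableSet s := measurableSet_ball.diff (measurableSet_singleton ζ)
  have hae : hyperbolicMeasure.restrict s = hyperbolicMeasure :=
    Measure.restrict_eq_self_of_ae_mem <| by
      filter_upwards [ae_hyperbolicMeasure_mem_ball, Measure.ae_ne hyperbolicMeasure ζ]
        with z hz hzζ using ⟨hz, hzζ⟩
  calc ∫⁻ z, F (discKernel ζ z) ∂hyperbolicMeasure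
      = ∫⁻ z in s, ENNReal.ofReal (hyperbolicDensity z) * F (discKernel ζ z) := by
        rw [← hae, restrict_hyperbolicMeasure hs Set.sdiff_subset,
          lintegral_withDensity_eq_lintegral_mul _ measurable_hyperbolicDensity.ennreal_ofReal
            (g := fun z => F (discKernel ζ z)) (hF.comp (measurable_discKernel ζ))]
        rfl
    _ = ∫⁻ z in s, ENNReal.ofReal |((ContinuousLinearMap.toSpanSingleton ℂ
          ((1 - ζ * conj ζ) / (ζ - z) ^ 2)).restrictScalars ℝ).det| *
          (ENNReal.ofReal (hyperbolicDensity (discKernel ζ z)) * F (discKernel ζ z)) := by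
        refine setLIntegral_congr_fun hs fun z hz => ?_
        rw [det_restrictScalars_toSpanSingleton, abs_of_nonneg (sq_nonneg _), ← mul_assoc,
          ← ENNReal.ofReal_mul (sq_nonneg _),
          norm_sq_deriv_mul_hyperbolicDensity_discKernel hζ hz.1 hz.2]
    _ = ∫⁻ u in discKernel ζ '' s, ENNReal.ofReal (hyperbolicDensity u) * F u :=
        (lintegral_image_eq_lintegral_abs_det_fderiv_mul volume hs
          (fun z hz => ((hasDerivAt_discKernel hz.2).hasFDerivAt.restrictScalars
            ℝ).hasFDerivWithinAt)
          ((injOn_discKernel hζ).mono fun z hz => hz.2)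
          fun u => ENNReal.ofReal (hyperbolicDensity u) * F u).symm
    _ ≤ ∫⁻ u, ENNReal.ofReal (hyperbolicDensity u) * F u := setLIntegral_le_lintegral _ _

lemma lintegral_hyperbolicDensity_halfPlane_rotated (e : Circle) (hc : 1 < c) :
    ∫⁻ u : ℂ, ENNReal.ofReal (hyperbolicDensity u) * ENNReal.ofReal ((e * u).re - c) =
      ENNReal.ofReal ((c - √(c ^ 2 - 1)) / 2) := by
  have hmeas : Measurable fun u : ℂ =>
      ENNReal.ofReal (hyperbolicDensity u) * ENNReal.ofReal (u.re - c) :=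
    measurable_hyperbolicDensity.ennreal_ofReal.mul (by fun_prop)
  rw [← lintegral_hyperbolicDensity_halfPlane hc,
    ← (rotation e).measurePreserving.lintegral_comp hmeas]
  simp only [hyperbolicDensity, rotation_apply, norm_mul, Circle.norm_coe, one_mul]

lemma setIntegral_le_of_lintegral_sub_le {α : Type*} [MeasurableSpace α] {μ : Measure α}
    {s : Set α} {v : α → ℝ} {δ : ℝ} (hs : μ s ≠ ⊤) (hv : IntegrableOn v s μ) (hδ : 0 ≤ δ)
    (h : ∫⁻ x, ENNReal.ofReal (v x - c) ∂μ ≤ ENNReal.ofReal δ) :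
    ∫ x in s, v x ∂μ ≤ c * μ.real s + δ := by
  have hconst : IntegrableOn (fun _ => c) s μ := integrableOn_const hs
  have hsub : ∫ x in s, (v x - c) ∂μ ≤ δ :=
    calc ∫ x in s, (v x - c) ∂μ ≤ (∫⁻ x in s, ENNReal.ofReal (v x - c) ∂μ).toReal := by
          rw [integral_eq_lintegral_pos_part_sub_lintegral_neg_part
            (f := fun x => v x - c) (hv.sub hconst)]
          exact sub_le_self _ ENNReal.toReal_nonneg
      _ ≤ δ := ENNReal.toReal_le_of_le_ofReal hδ ((setLIntegral_le_lintegral _ _).trans h)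
  rw [integral_sub hv hconst, setIntegral_const, smul_eq_mul] at hsub
  linarith

lemma norm_setIntegral_discKernel_le_of_one_lt (hζ : ζ ∈ ball (0 : ℂ) 1)
    (hE : hyperbolicMeasure E ≠ ⊤) (hc : 1 < c) :
    ‖∫ z in E, discKernel ζ z ∂hyperbolicMeasure‖ ≤
      c * hyperbolicMeasure.real E + (c - √(c ^ 2 - 1)) / 2 := by
  have hδ : 0 ≤ (c - √(c ^ 2 - 1)) / 2 := by
    have : √(c ^ 2 - 1) ≤ c := Real.sqrt_le_iff.2 ⟨by linarith, by linarith⟩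
    linarith
  by_cases hint : IntegrableOn (discKernel ζ) E hyperbolicMeasure
  · obtain ⟨e, he, hnorm⟩ := exists_norm_eq_mul_self (∫ z in E, discKernel ζ z ∂hyperbolicMeasure)
    have hre : ‖∫ z in E, discKernel ζ z ∂hyperbolicMeasure‖ =
        ∫ z in E, (e * discKernel ζ z).re ∂hyperbolicMeasure := by
      rw [← ofReal_re ‖_‖, hnorm, ← integral_const_mul]
      exact (integral_re (hint.const_mul e)).symm
    rw [hre]
    refine setIntegral_le_of_lintegral_sub_le hE (hint.const_mul e).re hδ
      ((lintegral_comp_discKernel_le hζ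
        (F := fun u => ENNReal.ofReal ((e * u).re - c)) (by fun_prop)).trans_eq ?_)
    exact lintegral_hyperbolicDensity_halfPlane_rotated ⟨e, mem_sphere_zero_iff_norm.2 he⟩ hc
  · rw [integral_undef hint, norm_zero]
    exact add_nonneg (mul_nonneg (by linarith) measureReal_nonneg) hδ

lemma norm_setIntegral_discKernel_le (hζ : ζ ∈ ball (0 : ℂ) 1) (hE : hyperbolicMeasure E ≠ ⊤) :
    ‖∫ z in E, discKernel ζ z ∂hyperbolicMeasure‖ ≤
      √(hyperbolicMeasure.real E + hyperbolicMeasure.real E ^ 2) := by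
  set A := hyperbolicMeasure.real E with hA
  rcases (measureReal_nonneg : 0 ≤ A).eq_or_lt with hzero | hpos
  · have hE0 : hyperbolicMeasure E = 0 := by rw [← measureReal_eq_zero_iff hE, ← hzero]
    rw [Measure.restrict_eq_zero.2 hE0, integral_zero_measure, norm_zero]
    exact Real.sqrt_nonneg _
  · have hS : 0 < √(A + A ^ 2) := Real.sqrt_pos.2 (by positivity)
    have hsq : √(A + A ^ 2) ^ 2 = A + A ^ 2 := Real.sq_sqrt (by positivity)
    set S := √(A + A ^ 2)
    -- the half-plane `c < re u` whose preimage in the disc has measure `A`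
    set c := (1 + 2 * A) / (2 * S) with hcdef
    have hc2 : c ^ 2 - 1 = (1 / (2 * S)) ^ 2 := by
      rw [hcdef]
      field_simp
      rw [hsq]
      ring
    have hc : 1 < c := by
      have : 0 < (1 / (2 * S)) ^ 2 := by positivity
      have : 0 < c := by positivity
      nlinarith
    have hle := norm_setIntegral_discKernel_le_of_one_lt hζ hE hc
    rw [← hA, hc2, Real.sqrt_sq (by positivity)] at hle
    refine hle.trans_eq ?_
    rw [hcdef]
    field_simp
    rw [hsq]
    ring

end Bathtub

section Isoperimetric

variable {G g : ℂ → ℂ} {E : Set ℂ} {ζ z : ℂ}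

lemma tsupport_dbar_subset (g : ℂ → ℂ) : tsupport (dbar g) ⊆ tsupport g :=
  closure_minimal (fun _ hz => by_contra fun h => hz (dbar_eq_zero_of_notMem_tsupport h))
    (isClosed_tsupport g)

lemma integrableOn_inv_norm_ball (r : ℝ) : IntegrableOn (fun w : ℂ => ‖w‖⁻¹) (ball 0 r) := by
  rw [← integrable_indicator_iff measurableSet_ball]
  have hradial : (ball (0 : ℂ) r).indicator (fun w => ‖w‖⁻¹) =
      fun w => (Set.Iio r).indicator (fun t => t⁻¹) ‖w‖ := by
    ext w
    simp [Set.indicator]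
  rw [hradial, integrable_fun_norm_addHaar volume, finrank_real_complex]
  have hone : IntegrableOn ((Set.Ioo 0 r).indicator fun _ => (1 : ℝ)) (Set.Ioi 0) :=
    ((integrable_indicator_iff measurableSet_Ioo).2 (integrableOn_const (by simp))).integrableOn
  refine hone.congr_fun (fun t (ht : 0 < t) => ?_) measurableSet_Ioi
  by_cases htr : t < r <;> simp [ht, htr, ht.ne']

lemma locallyIntegrable_inv : LocallyIntegrable fun w : ℂ => w⁻¹ := by
  rw [locallyIntegrable_iff]
  intro K hK
  obtain ⟨r, hr⟩ := hK.isBounded.subset_ball 0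
  exact ((integrableOn_inv_norm_ball r).mono_set hr).mono' (by fun_prop)
    (.of_forall fun w => (norm_inv w).le)

lemma integrable_div_sub (hG : Continuous G) (hGc : HasCompactSupport G) (z : ℂ) :
    Integrable fun ζ => G ζ / (ζ - z) := by
  have h := (locallyIntegrable_inv.integrable_smul_left_of_hasCompactSupport
    (hG.comp (continuous_add_const z))
    (hGc.comp_homeomorph (Homeomorph.addRight z))).comp_sub_right z
  simpa only [smul_eq_mul, Function.comp_def, sub_add_cancel, ← div_eq_mul_inv] using h

lemma norm_discKernel_le (hζ : ζ ∈ ball (0 : ℂ) 1) (hz : z ∈ ball (0 : ℂ) 1) :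
    ‖discKernel ζ z‖ ≤ 2 * (ball (0 : ℂ) 2).indicator (fun w => ‖w‖⁻¹) (ζ - z) := by
  rw [mem_ball_zero_iff] at hζ hz
  rw [Set.indicator_of_mem, discKernel, norm_div, div_eq_mul_inv]
  · gcongr
    calc ‖1 - conj ζ * z‖ ≤ ‖(1 : ℂ)‖ + ‖conj ζ * z‖ := norm_sub_le _ _
      _ ≤ 1 + 1 * 1 := by
        rw [norm_one, norm_mul, RCLike.norm_conj]
        gcongr
      _ = 2 := by norm_num
  · rw [mem_ball_zero_iff]
    linarith [norm_sub_le ζ z]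

lemma integrable_mul_discKernel (hG : Continuous G) (hGc : HasCompactSupport G)
    (hGb : tsupport G ⊆ ball 0 1) {ν : Measure ℂ} [IsFiniteMeasure ν]
    (hν : ∀ᵐ z ∂ν, z ∈ ball (0 : ℂ) 1) :
    Integrable (fun p : ℂ × ℂ => G p.1 * discKernel p.1 p.2) (volume.prod ν) := by
  obtain ⟨M, hM⟩ := hGc.exists_bound_of_continuous hG
  have hM0 : 0 ≤ M := (norm_nonneg _).trans (hM 0)
  have hker : Integrable ((ball (0 : ℂ) 2).indicator fun w => ‖w‖⁻¹) :=
    (integrable_indicator_iff measurableSet_ball).2 (integrableOn_inv_norm_ball 2)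
  have hconv := Integrable.convolution_integrand (ContinuousLinearMap.mul ℝ ℝ)
    (integrable_const (μ := ν) (1 : ℝ)) hker
  refine (hconv.const_mul (M * 2)).mono' ?_ ?_
  · have := hG.measurable
    unfold discKernel
    exact Measurable.aestronglyMeasurable (by fun_prop)
  · filter_upwards [Measure.quasiMeasurePreserving_snd.ae hν] with p hp
    simp only [ContinuousLinearMap.mul_apply', one_mul, norm_mul, mul_assoc]
    by_cases hz : p.1 ∈ tsupport G
    · exact mul_le_mul (hM _) (norm_discKernel_le (hGb hz) hp) (norm_nonneg _) hM0
    · rw [image_eq_zero_of_notMem_tsupport hz, norm_zero, zero_mul]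
      have := Set.indicator_nonneg (s := ball (0 : ℂ) 2) (f := fun w => ‖w‖⁻¹)
        (fun w _ => inv_nonneg.2 (norm_nonneg w)) (p.1 - p.2)
      positivity

lemma integral_dbar_mul_hyperbolicPotential (hg : ContDiff ℝ 1 g) (hgc : HasCompactSupport g)
    (hgb : tsupport g ⊆ ball 0 1) :
    ∫ ζ, hyperbolicPotential ζ * dbar g ζ = -Real.pi * ∫ z, g z ∂hyperbolicMeasure := by
  rw [integral_mul_dbar_eq_neg hg hgc fun z hz => contDiffAt_hyperbolicPotential (hgb hz),
    integral_hyperbolicMeasure ((subset_tsupport g).trans hgb), neg_mul, ← integral_const_mul]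
  congr 2 with z
  by_cases hz : z ∈ tsupport g
  · rw [dbar_hyperbolicPotential (hgb hz), real_smul, mul_assoc]
  · simp only [image_eq_zero_of_notMem_tsupport hz, mul_zero, smul_zero]

lemma hyperbolicPotential_add_inv_sub (hζ : ζ ∈ ball (0 : ℂ) 1) (hz : ζ ≠ z) :
    hyperbolicPotential ζ + (ζ - z)⁻¹ = discKernel ζ z / (1 - ζ * conj ζ) := by
  have h1 := one_sub_mul_conj_ne_zero hζ
  have h2 := sub_ne_zero.2 hz
  rw [hyperbolicPotential, discKernel, ← div_eq_mul_inv, inv_eq_one_div, div_add_div _ _ h1 h2,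
    div_div, div_eq_div_iff (mul_ne_zero h1 h2) (mul_ne_zero h2 h1)]
  ring

lemma continuous_dbar_div_one_sub_mul_conj (hg : ContDiff ℝ 1 g) (hgb : tsupport g ⊆ ball 0 1) :
    Continuous fun ζ => dbar g ζ / (1 - ζ * conj ζ) := by
  refine continuous_of_tsupport fun ζ hζ => ?_
  have hζ' : ζ ∈ tsupport g :=
    tsupport_dbar_subset g (closure_mono (fun w hw => left_ne_zero_of_mul hw) hζ)
  exact (continuous_dbar hg).continuousAt.div
    (contDiff_one_sub_mul_conj (n := 0)).continuous.continuousAt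
    (one_sub_mul_conj_ne_zero (hgb hζ'))

lemma integral_dbar_div_mul_discKernel (hg : ContDiff ℝ 1 g) (hgc : HasCompactSupport g)
    (hgb : tsupport g ⊆ ball 0 1) (z : ℂ) :
    ∫ ζ, dbar g ζ / (1 - ζ * conj ζ) * discKernel ζ z =
      -Real.pi * (g z + ∫ w, g w ∂hyperbolicMeasure) := by
  have hdbar : HasCompactSupport (dbar g) := hgc.of_isClosed_subset isClosed_closure
    (tsupport_dbar_subset g)
  rw [mul_add, ← integral_dbar_div_sub hg hgc z, ← integral_dbar_mul_hyperbolicPotential hg hgc hgb,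
    ← integral_add (integrable_div_sub (continuous_dbar hg) hdbar z)
      (integrable_mul_of_continuousAt_tsupport (continuous_dbar hg) hdbar fun w hw =>
        (contDiffAt_hyperbolicPotential (n := 0) (hgb (tsupport_dbar_subset g hw))).continuousAt)]
  refine integral_congr_ae ?_
  filter_upwards [Measure.ae_ne volume z] with ζ hζ
  by_cases hsupp : ζ ∈ tsupport g
  · linear_combination -dbar g ζ * hyperbolicPotential_add_inv_sub (hgb hsupp) hζ
  · simp only [dbar_eq_zero_of_notMem_tsupport hsupp, zero_div, zero_mul, mul_zero, add_zero]

lemma tsupport_dbar_div_one_sub_mul_conj_subset (g : ℂ → ℂ) :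
    tsupport (fun ζ => dbar g ζ / (1 - ζ * conj ζ)) ⊆ tsupport g :=
  (closure_mono fun _ hζ => left_ne_zero_of_mul hζ).trans (tsupport_dbar_subset g)

theorem norm_integral_hyperbolicMeasure_le (hg : ContDiff ℝ 1 g) (hgc : HasCompactSupport g)
    (hgb : tsupport g ⊆ ball 0 1) (hEfin : hyperbolicMeasure E ≠ ⊤)
    (hgE : Function.support g ⊆ E) :
    Real.pi * (1 + hyperbolicMeasure.real E) * ‖∫ z, g z ∂hyperbolicMeasure‖ ≤
      √(hyperbolicMeasure.real E + hyperbolicMeasure.real E ^ 2) *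
        ∫ ζ, ‖dbar g ζ / (1 - ζ * conj ζ)‖ := by
  set A := hyperbolicMeasure.real E with hA
  have : 0 ≤ A := measureReal_nonneg
  have : IsFiniteMeasure (hyperbolicMeasure.restrict E) := isFiniteMeasure_restrict.2 hEfin
  have hGcont := continuous_dbar_div_one_sub_mul_conj hg hgb
  have hGsupp := tsupport_dbar_div_one_sub_mul_conj_subset g
  have hGc : HasCompactSupport fun ζ => dbar g ζ / (1 - ζ * conj ζ) :=
    hgc.of_isClosed_subset isClosed_closure hGsupp
  have hswap : ∫ ζ, dbar g ζ / (1 - ζ * conj ζ) * ∫ z in E, discKernel ζ z ∂hyperbolicMeasure =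
      -Real.pi * (1 + A) * ∫ w, g w ∂hyperbolicMeasure := by
    conv_lhs => simp only [← integral_const_mul]
    rw [integral_integral_swap (integrable_mul_discKernel hGcont hGc (hGsupp.trans hgb)
      (ae_restrict_of_ae ae_hyperbolicMeasure_mem_ball))]
    simp only [integral_dbar_div_mul_discKernel hg hgc hgb]
    rw [integral_const_mul, integral_add
      (integrable_hyperbolicMeasure_of_hasCompactSupport hg.continuous hgc hgb).integrableOn
      (integrable_const _), integral_const, measureReal_restrict_apply_univ,
      setIntegral_eq_integral_of_forall_compl_eq_zero fun z hz =>
        Function.notMem_support.1 fun h => hz (hgE h), ← hA, real_smul]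
    ring
  calc Real.pi * (1 + A) * ‖∫ z, g z ∂hyperbolicMeasure‖
      = ‖∫ ζ, dbar g ζ / (1 - ζ * conj ζ) * ∫ z in E, discKernel ζ z ∂hyperbolicMeasure‖ := by
        rw [hswap, norm_mul, ← ofReal_one, ← ofReal_add, neg_mul, norm_neg, ← ofReal_mul, norm_real,
          Real.norm_of_nonneg (by positivity)]
    _ ≤ ∫ ζ, ‖dbar g ζ / (1 - ζ * conj ζ)‖ * √(A + A ^ 2) := by
        refine norm_integral_le_of_norm_le
          ((hGcont.integrable_of_hasCompactSupport hGc).norm.mul_const _) (.of_forall fun ζ => ?_)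
        rw [norm_mul]
        by_cases hζ : ζ ∈ tsupport g
        · gcongr
          exact norm_setIntegral_discKernel_le (hgb hζ) hEfin
        · simp only [dbar_eq_zero_of_notMem_tsupport hζ, zero_div, norm_zero, zero_mul, le_refl]
    _ = √(A + A ^ 2) * ∫ ζ, ‖dbar g ζ / (1 - ζ * conj ζ)‖ := by rw [integral_mul_const, mul_comm]

end Isoperimetric

section CoherentDensity

/-- The squared modulus `(1 - |z|²)^{2k} |Φ(z)|²` of the coherent state transform of parameter `k`
attached to the holomorphic function `Φ`, extended by zero outside the unit disc. -/
noncomputable def coherentDensity (k : ℝ) (Φ : ℂ → ℂ) : ℂ → ℝ :=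
  (ball (0 : ℂ) 1).indicator fun z => (1 - ‖z‖ ^ 2) ^ (2 * k) * ‖Φ z‖ ^ 2

/-- The holomorphic derivative `∂ log S = Φ'/Φ - 2k z̄ / (1 - |z|²)` of the logarithm of
`S = coherentDensity k Φ`, defined where `Φ` does not vanish. -/
noncomputable def coherentLogDeriv (k : ℝ) (Φ : ℂ → ℂ) (z : ℂ) : ℂ :=
  deriv Φ z / Φ z - 2 * k * hyperbolicPotential z

variable {k : ℝ} {Φ : ℂ → ℂ} {z : ℂ}

lemma coherentDensity_of_mem_ball (hz : z ∈ ball (0 : ℂ) 1) :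
    coherentDensity k Φ z = (1 - ‖z‖ ^ 2) ^ (2 * k) * ‖Φ z‖ ^ 2 :=
  Set.indicator_of_mem hz _

lemma coherentDensity_nonneg (z : ℂ) : 0 ≤ coherentDensity k Φ z :=
  Set.indicator_nonneg (fun _ hw => mul_nonneg (Real.rpow_nonneg (one_sub_norm_sq_pos hw).le _)
    (sq_nonneg _)) z

lemma mem_ball_of_coherentDensity_pos (hz : 0 < coherentDensity k Φ z) : z ∈ ball (0 : ℂ) 1 :=
  Set.mem_of_indicator_ne_zero hz.ne'

lemma ne_zero_of_coherentDensity_pos (hz : 0 < coherentDensity k Φ z) : Φ z ≠ 0 := by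
  rintro h
  simp [coherentDensity_of_mem_ball (mem_ball_of_coherentDensity_pos hz), h] at hz

lemma contDiffAt_coherentDensity (k : ℝ) (hΦ : DifferentiableOn ℂ Φ (ball 0 1))
    (hz : z ∈ ball (0 : ℂ) 1) :
    ContDiffAt ℝ 1 (coherentDensity k Φ) z := by
  have hnhds := isOpen_ball.mem_nhds hz
  have hΦz : ContDiffAt ℝ 1 Φ z := (hΦ.analyticAt hnhds).contDiffAt.restrict_scalars ℝ
  have hweight : ContDiffAt ℝ 1 (fun w : ℂ => 1 - ‖w‖ ^ 2) z :=
    contDiffAt_const.sub (contDiffAt_id.norm_sq ℝ)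
  refine ((hweight.rpow_const_of_ne (p := 2 * k) (one_sub_norm_sq_pos hz).ne').mul
    (hΦz.norm_sq ℝ)).congr_of_eventuallyEq ?_
  filter_upwards [hnhds] with w hw using coherentDensity_of_mem_ball hw

lemma contDiffAt_coherentLogDeriv (k : ℝ) (hΦ : AnalyticAt ℂ Φ z) (hΦz : Φ z ≠ 0)
    (hz : z ∈ ball (0 : ℂ) 1) : ContDiffAt ℝ 1 (coherentLogDeriv k Φ) z :=
  ((hΦ.deriv.div hΦ hΦz).contDiffAt.restrict_scalars ℝ).sub
    (contDiffAt_const.mul (contDiffAt_hyperbolicPotential hz))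

lemma dbar_coherentLogDeriv (k : ℝ) (hΦ : AnalyticAt ℂ Φ z) (hΦz : Φ z ≠ 0)
    (hz : z ∈ ball (0 : ℂ) 1) :
    dbar (coherentLogDeriv k Φ) z = -(2 * k * Real.pi * hyperbolicDensity z) := by
  have hlog : DifferentiableAt ℂ (fun w => deriv Φ w / Φ w) z :=
    (hΦ.deriv.div hΦ hΦz).differentiableAt
  have hpot : DifferentiableAt ℝ hyperbolicPotential z :=
    (contDiffAt_hyperbolicPotential hz).differentiableAt one_ne_zero
  have hconst : DifferentiableAt ℂ (fun _ : ℂ => (2 * k : ℂ)) z := differentiableAt_const _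
  unfold coherentLogDeriv
  rw [dbar_sub (hlog.restrictScalars ℝ) ((hconst.restrictScalars ℝ).fun_mul hpot),
    dbar_eq_zero_of_differentiableAt hlog, dbar_mul (hconst.restrictScalars ℝ) hpot,
    dbar_eq_zero_of_differentiableAt hconst, dbar_hyperbolicPotential hz]
  ring

lemma dbar_one_sub_norm_sq_rpow (s : ℝ) (hz : z ∈ ball (0 : ℂ) 1) :
    dbar (fun w => (((1 - ‖w‖ ^ 2) ^ s : ℝ) : ℂ)) z =
      -(s * conj (hyperbolicPotential z) * ((1 - ‖z‖ ^ 2) ^ s : ℝ)) := by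
  have hpos := one_sub_norm_sq_pos hz
  have hne := one_sub_mul_conj_ne_zero hz
  have hweight : DifferentiableAt ℝ (fun w : ℂ => 1 - ‖w‖ ^ 2) z :=
    (differentiableAt_const 1).sub (differentiableAt_id.norm_sq ℝ)
  have hpow := Real.hasDerivAt_rpow_const (p := s) (Or.inl hpos.ne')
  rw [dbar_ofReal_comp (h := fun x => x ^ s) hpow.differentiableAt hweight, hpow.deriv]
  simp_rw [← one_sub_mul_conj]
  rw [dbar_one_sub_mul_conj, Real.rpow_sub_one hpos.ne', hyperbolicPotential, ofReal_mul,
    ofReal_div, ← one_sub_mul_conj, map_mul, map_inv₀, map_sub, map_mul, map_one, conj_conj,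
    mul_comm (conj z) z]
  field_simp

lemma dbar_coherentDensity (k : ℝ) (hΦ : DifferentiableAt ℂ Φ z) (hΦz : Φ z ≠ 0)
    (hz : z ∈ ball (0 : ℂ) 1) :
    dbar (fun w => (coherentDensity k Φ w : ℂ)) z =
      coherentDensity k Φ z * conj (coherentLogDeriv k Φ z) := by
  have hnhds := isOpen_ball.mem_nhds hz
  have heq : (fun w => (coherentDensity k Φ w : ℂ)) =ᶠ[𝓝 z]
      fun w => (((1 - ‖w‖ ^ 2) ^ (2 * k) : ℝ) : ℂ) * (Φ w * conj (Φ w)) := by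
    filter_upwards [hnhds] with w hw
    rw [coherentDensity_of_mem_ball hw, mul_conj, normSq_eq_norm_sq, ofReal_mul]
  have hweight : DifferentiableAt ℝ (fun w : ℂ => (((1 - ‖w‖ ^ 2) ^ (2 * k) : ℝ) : ℂ)) z :=
    ofRealCLM.differentiableAt.comp z (((differentiableAt_const 1).sub
      (differentiableAt_id.norm_sq ℝ)).rpow_const (Or.inl (one_sub_norm_sq_pos hz).ne'))
  have hΦr : DifferentiableAt ℝ Φ z := hΦ.restrictScalars ℝ
  have hΦconj : DifferentiableAt ℝ (fun w => conj (Φ w)) z := conjCLE.differentiableAt.comp z hΦr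
  rw [heq.eq_of_nhds, dbar, heq.fderiv_eq, ← dbar, dbar_mul hweight (hΦr.fun_mul hΦconj),
    dbar_mul hΦr hΦconj, dbar_one_sub_norm_sq_rpow _ hz, dbar_conj_comp hΦ,
    dbar_eq_zero_of_differentiableAt hΦ, coherentLogDeriv]
  have hne : conj (Φ z) ≠ 0 := (map_ne_zero _).2 hΦz
  simp only [map_sub, map_div₀, map_mul, conj_ofReal, map_ofNat, ofReal_mul, ofReal_ofNat]
  field_simp
  ring

end CoherentDensity

section Decay

variable {k : ℝ} {Φ : ℂ → ℂ} {z ζ : ℂ}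

lemma norm_sq_mul_le_setIntegral_ball {δ : ℝ} (hδ : 0 ≤ δ) (hΦ : DiffContOnCl ℂ Φ (ball z δ)) :
    Real.pi * δ ^ 2 * ‖Φ z‖ ^ 2 ≤ ∫ ζ in ball z δ, ‖Φ ζ‖ ^ 2 := by
  have hmean : ∫ ζ in ball z δ, Φ ζ ^ 2 = (Real.pi * δ ^ 2 : ℝ) • Φ z ^ 2 :=
    setIntegral_ball_of_diffContOnCl hδ (by simpa only [sq, smul_eq_mul] using hΦ.smul hΦ)
  calc Real.pi * δ ^ 2 * ‖Φ z‖ ^ 2 = ‖∫ ζ in ball z δ, Φ ζ ^ 2‖ := by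
        rw [hmean, norm_smul, norm_pow, Real.norm_of_nonneg (by positivity)]
    _ ≤ ∫ ζ in ball z δ, ‖Φ ζ ^ 2‖ := norm_integral_le_integral_norm _
    _ = ∫ ζ in ball z δ, ‖Φ ζ‖ ^ 2 := by simp only [norm_pow]

lemma one_sub_norm_sq_mem_Icc (hz : z ∈ ball (0 : ℂ) 1) (hζ : ζ ∈ closedBall z ((1 - ‖z‖) / 2)) :
    1 - ‖ζ‖ ^ 2 ∈ Set.Icc ((1 - ‖z‖) / 2) (6 * ((1 - ‖z‖) / 2)) := by
  have hz1 : ‖z‖ < 1 := mem_ball_zero_iff.1 hz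
  have hζz : ‖ζ - z‖ ≤ (1 - ‖z‖) / 2 := mem_closedBall_iff_norm.1 hζ
  have hupper := norm_sub_norm_le ζ z
  have hlower := norm_sub_norm_le z ζ
  rw [norm_sub_rev] at hlower
  constructor <;> nlinarith [norm_nonneg z, norm_nonneg ζ]

lemma closedBall_half_subset_ball (hz : z ∈ ball (0 : ℂ) 1) :
    closedBall z ((1 - ‖z‖) / 2) ⊆ ball 0 1 := by
  refine closedBall_subset_ball' ?_
  rw [dist_zero_right]
  linarith [mem_ball_zero_iff.1 hz]

lemma norm_sq_le_hyperbolicDensity_mul_coherentDensity (hk : 0 ≤ k) (Φ : ℂ → ℂ)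
    (hz : z ∈ ball (0 : ℂ) 1) (hζ : ζ ∈ ball z ((1 - ‖z‖) / 2)) :
    ‖Φ ζ‖ ^ 2 ≤ 36 * Real.pi * ((1 - ‖z‖) / 2) ^ 2 / ((1 - ‖z‖) / 2) ^ (2 * k) *
      (hyperbolicDensity ζ * coherentDensity k Φ ζ) := by
  have hζb := closedBall_half_subset_ball hz (ball_subset_closedBall hζ)
  obtain ⟨hlower, hupper⟩ := one_sub_norm_sq_mem_Icc hz (ball_subset_closedBall hζ)
  have hδ : 0 < (1 - ‖z‖) / 2 := half_pos (sub_pos.2 (mem_ball_zero_iff.1 hz))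
  have hX := one_sub_norm_sq_pos hζb
  have hpow := Real.rpow_pos_of_pos hδ (2 * k)
  rw [coherentDensity_of_mem_ball hζb, hyperbolicDensity]
  set δ := (1 - ‖z‖) / 2
  set X := 1 - ‖ζ‖ ^ 2
  calc ‖Φ ζ‖ ^ 2 ≤ ((6 * δ) ^ 2 / X ^ 2) * (X ^ (2 * k) / δ ^ (2 * k)) * ‖Φ ζ‖ ^ 2 := by
        refine le_mul_of_one_le_left (sq_nonneg _) (one_le_mul_of_one_le_of_one_le ?_ ?_)
        · rw [one_le_div (pow_pos hX 2)]
          gcongr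
        · rw [one_le_div hpow]
          gcongr
    _ = _ := by
        field_simp
        ring

lemma coherentDensity_le_setIntegral (hk : 0 ≤ k) (hΦ : DifferentiableOn ℂ Φ (ball 0 1))
    (hint : Integrable (coherentDensity k Φ) hyperbolicMeasure) (hz : z ∈ ball (0 : ℂ) 1) :
    coherentDensity k Φ z ≤ 36 * 6 ^ (2 * k) *
      ∫ ζ in ball z ((1 - ‖z‖) / 2), coherentDensity k Φ ζ ∂hyperbolicMeasure := by
  have hδ : 0 < (1 - ‖z‖) / 2 := half_pos (sub_pos.2 (mem_ball_zero_iff.1 hz))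
  have hclosed := closedBall_half_subset_ball hz
  have hball := ball_subset_closedBall.trans hclosed
  have hpow := Real.rpow_pos_of_pos hδ (2 * k)
  have hz6 := (one_sub_norm_sq_mem_Icc hz (mem_closedBall_self hδ.le)).2
  have hpointwise := fun ζ => norm_sq_le_hyperbolicDensity_mul_coherentDensity (ζ := ζ) hk Φ hz
  set δ := (1 - ‖z‖) / 2
  set J := ∫ ζ in ball z δ, coherentDensity k Φ ζ ∂hyperbolicMeasure with hJ
  have hmean : Real.pi * δ ^ 2 * ‖Φ z‖ ^ 2 ≤ 36 * Real.pi * δ ^ 2 / δ ^ (2 * k) * J := by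
    refine (norm_sq_mul_le_setIntegral_ball hδ.le (hΦ.diffContOnCl_ball hclosed)).trans ?_
    rw [hJ, setIntegral_hyperbolicMeasure measurableSet_ball hball, ← integral_const_mul]
    refine setIntegral_mono_on ?_ (((integrableOn_hyperbolicMeasure_iff measurableSet_ball hball).1
      hint.integrableOn).const_mul _) measurableSet_ball hpointwise
    exact (((hΦ.continuousOn.mono hclosed).norm.pow 2).integrableOn_compact
      (isCompact_closedBall z δ)).mono_set ball_subset_closedBall
  calc coherentDensity k Φ z ≤ (6 * δ) ^ (2 * k) * ‖Φ z‖ ^ 2 := by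
        rw [coherentDensity_of_mem_ball hz]
        have := one_sub_norm_sq_pos hz
        gcongr
    _ = 6 ^ (2 * k) * δ ^ (2 * k) / (Real.pi * δ ^ 2) * (Real.pi * δ ^ 2 * ‖Φ z‖ ^ 2) := by
        rw [Real.mul_rpow (by norm_num) hδ.le]
        field_simp
    _ ≤ 6 ^ (2 * k) * δ ^ (2 * k) / (Real.pi * δ ^ 2) *
          (36 * Real.pi * δ ^ 2 / δ ^ (2 * k) * J) := by gcongr
    _ = 36 * 6 ^ (2 * k) * J := by field_simp

lemma exists_setIntegral_compl_ball_lt {G : ℂ → ℝ} (hG : Integrable G hyperbolicMeasure) {ε : ℝ}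
    (hε : 0 < ε) : ∃ r < 1, ∫ z in (ball 0 r)ᶜ, G z ∂hyperbolicMeasure < ε := by
  have hcover : AECover hyperbolicMeasure (𝓝[<] (1 : ℝ)) fun r => ball (0 : ℂ) r :=
    { ae_eventually_mem := by
        filter_upwards [ae_hyperbolicMeasure_mem_ball] with z hz
        filter_upwards [Ioo_mem_nhdsLT (mem_ball_zero_iff.1 hz)] with r hr
        exact mem_ball_zero_iff.2 hr.1
      measurableSet := fun _ => measurableSet_ball }
  have hlim := hcover.integral_tendsto_of_countably_generated hG
  obtain ⟨r, hr, hr1⟩ := ((hlim.eventually (lt_mem_nhds (sub_lt_self _ hε))).and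
    self_mem_nhdsWithin).exists
  refine ⟨r, hr1, ?_⟩
  linarith [integral_add_compl (measurableSet_ball (x := (0 : ℂ)) (ε := r)) hG]

lemma exists_setOf_le_coherentDensity_subset (hk : 0 ≤ k) (hΦ : DifferentiableOn ℂ Φ (ball 0 1))
    (hint : Integrable (coherentDensity k Φ) hyperbolicMeasure) {t : ℝ} (ht : 0 < t) :
    ∃ r < 1, {z | t ≤ coherentDensity k Φ z} ⊆ closedBall 0 r := by
  set C : ℝ := 36 * 6 ^ (2 * k)
  have hC : 0 < C := by positivity
  obtain ⟨r, hr1, hr⟩ := exists_setIntegral_compl_ball_lt hint (div_pos ht hC)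
  refine ⟨(1 + 2 * r) / 3, by linarith, fun z hz => mem_closedBall_zero_iff.2 ?_⟩
  by_contra! hzr
  have hzb := mem_ball_of_coherentDensity_pos (ht.trans_le hz)
  have hsub : ball z ((1 - ‖z‖) / 2) ⊆ (ball 0 r)ᶜ := by
    intro ζ hζ hζr
    have := mem_ball_iff_norm'.1 hζ
    linarith [mem_ball_zero_iff.1 hζr, norm_sub_norm_le z ζ]
  refine (Set.mem_ofPred.1 hz).not_gt ?_
  calc coherentDensity k Φ z
      ≤ C * ∫ ζ in ball z ((1 - ‖z‖) / 2), coherentDensity k Φ ζ ∂hyperbolicMeasure :=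
        coherentDensity_le_setIntegral hk hΦ hint hzb
    _ ≤ C * ∫ ζ in (ball 0 r)ᶜ, coherentDensity k Φ ζ ∂hyperbolicMeasure :=
        mul_le_mul_of_nonneg_left (setIntegral_mono_set hint.integrableOn
          (ae_of_all _ coherentDensity_nonneg) (LE.le.eventuallyLE hsub)) hC.le
    _ < C * (t / C) := mul_lt_mul_of_pos_left hr hC
    _ = t := mul_div_cancel₀ t hC.ne'

lemma isCompact_setOf_le_coherentDensity (hk : 0 ≤ k) (hΦ : DifferentiableOn ℂ Φ (ball 0 1))
    (hint : Integrable (coherentDensity k Φ) hyperbolicMeasure) {t : ℝ} (ht : 0 < t) :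
    IsCompact {z | t ≤ coherentDensity k Φ z} := by
  obtain ⟨r, hr1, hr⟩ := exists_setOf_le_coherentDensity_subset hk hΦ hint ht
  have hcont : ContinuousOn (coherentDensity k Φ) (closedBall 0 r) := fun z hz =>
    (contDiffAt_coherentDensity k hΦ
      (closedBall_subset_ball hr1 hz)).continuousAt.continuousWithinAt
  rw [← Set.inter_eq_right.2 hr]
  exact (isCompact_closedBall 0 r).of_isClosed_subset
    (hcont.preimage_isClosed_of_isClosed isClosed_closedBall isClosed_Ici) Set.inter_subset_left

end Decay

lemma sq_integral_mul_mul_le {α : Type*} [MeasurableSpace α] {μ : Measure α} {θ u v : α → ℝ}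
    (hθ : ∀ x, 0 ≤ θ x) (hu : Integrable (fun x => θ x * u x ^ 2) μ)
    (hv : Integrable (fun x => θ x * v x ^ 2) μ) (huv : Integrable (fun x => θ x * u x * v x) μ) :
    (∫ x, θ x * u x * v x ∂μ) ^ 2 ≤ (∫ x, θ x * u x ^ 2 ∂μ) * ∫ x, θ x * v x ^ 2 ∂μ := by
  have hquad : ∀ s : ℝ, 0 ≤ (∫ x, θ x * u x ^ 2 ∂μ) * (s * s) +
      2 * (∫ x, θ x * u x * v x ∂μ) * s + ∫ x, θ x * v x ^ 2 ∂μ := by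
    intro s
    calc 0 ≤ ∫ x, θ x * (s * u x + v x) ^ 2 ∂μ :=
          integral_nonneg fun x => mul_nonneg (hθ x) (sq_nonneg _)
      _ = ∫ x, (θ x * u x ^ 2 * (s * s) + θ x * u x * v x * (2 * s) + θ x * v x ^ 2) ∂μ := by
          congr 1 with x
          ring
      _ = _ := by
          rw [integral_add ((hu.mul_const _).fun_add (huv.mul_const _)) hv,
            integral_add (hu.mul_const _) (huv.mul_const _), integral_mul_const,
            integral_mul_const]
          ring
  have := discrim_le_zero hquad
  rw [discrim] at this
  linarith

section LevelSets

variable {k a : ℝ} {Φ : ℂ → ℂ}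

lemma tsupport_comp_coherentDensity_subset {E : Type*} [Zero E] {u : ℝ → E}
    (hS : IsCompact {z | a ≤ coherentDensity k Φ z}) (hu : tsupport u ⊆ Set.Ici a) :
    tsupport (fun z => u (coherentDensity k Φ z)) ⊆ {z | a ≤ coherentDensity k Φ z} :=
  closure_minimal (fun _ hz => hu (subset_tsupport _ hz)) hS.isClosed

lemma hasCompactSupport_comp_coherentDensity {E : Type*} [Zero E] {u : ℝ → E}
    (hS : IsCompact {z | a ≤ coherentDensity k Φ z}) (hu : tsupport u ⊆ Set.Ici a) :
    HasCompactSupport fun z => u (coherentDensity k Φ z) :=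
  hS.of_isClosed_subset (isClosed_tsupport _) (tsupport_comp_coherentDensity_subset hS hu)

lemma comp_coherentDensity_support_subset_ball {E : Type*} [Zero E] {u : ℝ → E} (ha : 0 < a)
    (hu : tsupport u ⊆ Set.Ici a) :
    Function.support (fun z => u (coherentDensity k Φ z)) ⊆ ball 0 1 := fun _ hz =>
  mem_ball_of_coherentDensity_pos (ha.trans_le (hu (subset_tsupport _ hz)))

lemma contDiffAt_coherentLogDeriv_of_le (hΦ : DifferentiableOn ℂ Φ (ball 0 1)) (ha : 0 < a)
    {z : ℂ} (hz : a ≤ coherentDensity k Φ z) :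
    ContDiffAt ℝ 1 (coherentLogDeriv k Φ) z :=
  have hpos := ha.trans_le hz
  have hzb := mem_ball_of_coherentDensity_pos hpos
  contDiffAt_coherentLogDeriv k (hΦ.analyticAt (isOpen_ball.mem_nhds hzb))
    (ne_zero_of_coherentDensity_pos hpos) hzb

lemma tsupport_ofReal_subset {h : ℝ → ℝ} (hha : tsupport h ⊆ Set.Ici a) :
    tsupport (fun x => (h x : ℂ)) ⊆ Set.Ici a :=
  (closure_mono fun _ hx => ofReal_ne_zero.1 hx).trans hha

lemma tsupport_mul_deriv_subset {h : ℝ → ℝ} (hha : tsupport h ⊆ Set.Ici a) :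
    tsupport (fun x => x * deriv h x) ⊆ Set.Ici a :=
  (tsupport_mul_subset_right.trans tsupport_deriv_subset).trans hha

variable (hΦ : DifferentiableOn ℂ Φ (ball 0 1)) (ha : 0 < a)
  (hS : IsCompact {z | a ≤ coherentDensity k Φ z})

include hΦ ha hS

lemma contDiff_comp_coherentDensity {E : Type*} [NormedAddCommGroup E] [NormedSpace ℝ E]
    {n : WithTop ℕ∞} {u : ℝ → E} (hn : n ≤ 1) (huc : ContDiff ℝ n u)
    (hu : tsupport u ⊆ Set.Ici a) : ContDiff ℝ n fun z => u (coherentDensity k Φ z) :=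
  contMDiff_iff_contDiff.1 <| contMDiff_of_tsupport fun z hz => contMDiffAt_iff_contDiffAt.2 <|
    huc.contDiffAt.comp z <| (contDiffAt_coherentDensity k hΦ (mem_ball_of_coherentDensity_pos
      (ha.trans_le (tsupport_comp_coherentDensity_subset hS hu hz)))).of_le hn

lemma dbar_comp_coherentDensity {h : ℝ → ℝ} (hh : ContDiff ℝ 1 h) (hha : tsupport h ⊆ Set.Ici a)
    (z : ℂ) :
    dbar (fun w => (h (coherentDensity k Φ w) : ℂ)) z =
      (coherentDensity k Φ z * deriv h (coherentDensity k Φ z) : ℝ) *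
        conj (coherentLogDeriv k Φ z) := by
  by_cases hz : a ≤ coherentDensity k Φ z
  · have hpos := ha.trans_le hz
    have hzb := mem_ball_of_coherentDensity_pos hpos
    rw [dbar_ofReal_comp (hh.differentiable one_ne_zero _)
      ((contDiffAt_coherentDensity k hΦ hzb).differentiableAt one_ne_zero),
      dbar_coherentDensity k (hΦ.differentiableAt (isOpen_ball.mem_nhds hzb))
        (ne_zero_of_coherentDensity_pos hpos) hzb, ofReal_mul]
    ring
  · rw [dbar_eq_zero_of_notMem_tsupport fun hz' =>
        hz (tsupport_comp_coherentDensity_subset hS (tsupport_ofReal_subset hha) hz'),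
      deriv_of_notMem_tsupport fun hz' => hz (hha hz')]
    simp

variable {h : ℝ → ℝ} (hh : ContDiff ℝ 1 h) (hha : tsupport h ⊆ Set.Ici a)

include hh hha

lemma contDiff_ofReal_comp_coherentDensity :
    ContDiff ℝ 1 fun z => (h (coherentDensity k Φ z) : ℂ) :=
  ofRealCLM.contDiff.comp (contDiff_comp_coherentDensity hΦ ha hS le_rfl hh hha)

lemma continuous_mul_deriv_coherentDensity :
    Continuous fun z => coherentDensity k Φ z * deriv h (coherentDensity k Φ z) :=
  contDiff_zero.1 <| contDiff_comp_coherentDensity (u := fun x => x * deriv h x) hΦ ha hS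
    zero_le_one (contDiff_zero.2 (continuous_id.mul (hh.continuous_deriv le_rfl)))
    (tsupport_mul_deriv_subset hha)

lemma integral_norm_sq_coherentLogDeriv :
    ∫ z, coherentDensity k Φ z * deriv h (coherentDensity k Φ z) * ‖coherentLogDeriv k Φ z‖ ^ 2 =
      2 * k * Real.pi * ∫ z, h (coherentDensity k Φ z) ∂hyperbolicMeasure := by
  have hhaC := tsupport_ofReal_subset hha
  have hparts : ∫ z, coherentLogDeriv k Φ z * dbar (fun w => (h (coherentDensity k Φ w) : ℂ)) z =
      -∫ z, dbar (coherentLogDeriv k Φ) z * h (coherentDensity k Φ z) :=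
    integral_mul_dbar_eq_neg (contDiff_ofReal_comp_coherentDensity hΦ ha hS hh hha)
      (hasCompactSupport_comp_coherentDensity (u := fun x => (h x : ℂ)) hS hhaC) fun z hz =>
        contDiffAt_coherentLogDeriv_of_le hΦ ha
          (tsupport_comp_coherentDensity_subset (u := fun x => (h x : ℂ)) hS hhaC hz)
  have hleft : ∀ z, coherentLogDeriv k Φ z * dbar (fun w => (h (coherentDensity k Φ w) : ℂ)) z =
      (coherentDensity k Φ z * deriv h (coherentDensity k Φ z) *
        ‖coherentLogDeriv k Φ z‖ ^ 2 : ℝ) := by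
    intro z
    rw [dbar_comp_coherentDensity hΦ ha hS hh hha, mul_left_comm, mul_conj', ← ofReal_pow,
      ← ofReal_mul]
  have hright : ∀ z, -(dbar (coherentLogDeriv k Φ) z * h (coherentDensity k Φ z)) =
      (2 * k * Real.pi * (hyperbolicDensity z * h (coherentDensity k Φ z)) : ℝ) := by
    intro z
    by_cases hz : a ≤ coherentDensity k Φ z
    · have hpos := ha.trans_le hz
      have hzb := mem_ball_of_coherentDensity_pos hpos
      rw [dbar_coherentLogDeriv k (hΦ.analyticAt (isOpen_ball.mem_nhds hzb))
        (ne_zero_of_coherentDensity_pos hpos) hzb]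
      push_cast
      ring
    · simp [image_eq_zero_of_notMem_tsupport fun h' => hz (hha h')]
  rw [integral_hyperbolicMeasure (comp_coherentDensity_support_subset_ball ha hha)]
  simp only [smul_eq_mul]
  rw [← integral_neg] at hparts
  simp only [hleft, hright, integral_complex_ofReal, ofReal_inj, integral_const_mul] at hparts
  exact hparts

end LevelSets

section LevelSetInequality

lemma hyperbolicDensity_eq_norm_inv_sq (z : ℂ) :
    Real.pi * hyperbolicDensity z = ‖(1 - z * conj z)⁻¹‖ ^ 2 := by
  rw [hyperbolicDensity, mul_inv_cancel_left₀ Real.pi_ne_zero, one_sub_mul_conj, ← ofReal_inv,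
    norm_real, Real.norm_eq_abs, sq_abs, inv_pow]

variable {k a : ℝ} {Φ : ℂ → ℂ} {h : ℝ → ℝ} (hΦ : DifferentiableOn ℂ Φ (ball 0 1)) (ha : 0 < a)
  (hS : IsCompact {z | a ≤ coherentDensity k Φ z}) (hh : ContDiff ℝ 1 h)
  (hha : tsupport h ⊆ Set.Ici a)

include hΦ ha hS hh hha

lemma integrable_mul_deriv_coherentDensity_mul {φ : ℂ → ℝ}
    (hφ : ∀ z, a ≤ coherentDensity k Φ z → ContinuousAt φ z) :
    Integrable fun z => coherentDensity k Φ z * deriv h (coherentDensity k Φ z) * φ z := by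
  have hsupp := tsupport_mul_deriv_subset hha
  simp only [mul_comm _ (φ _)]
  exact integrable_mul_of_continuousAt_tsupport
    (continuous_mul_deriv_coherentDensity hΦ ha hS hh hha)
    (hasCompactSupport_comp_coherentDensity (u := fun x => x * deriv h x) hS hsupp) fun z hz =>
      hφ z (tsupport_comp_coherentDensity_subset (u := fun x => x * deriv h x) hS hsupp hz)

variable (hmono : Monotone h)

include hmono

lemma sq_integral_norm_dbar_div_le :
    (∫ z, ‖dbar (fun w => (h (coherentDensity k Φ w) : ℂ)) z / (1 - z * conj z)‖) ^ 2 ≤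
      (2 * k * Real.pi * ∫ z, h (coherentDensity k Φ z) ∂hyperbolicMeasure) *
        (Real.pi * ∫ z, coherentDensity k Φ z * deriv h (coherentDensity k Φ z)
          ∂hyperbolicMeasure) := by
  set θ : ℂ → ℝ := fun z => coherentDensity k Φ z * deriv h (coherentDensity k Φ z) with hθ_def
  have hθ : ∀ z, 0 ≤ θ z := fun z => mul_nonneg (coherentDensity_nonneg z) hmono.deriv_nonneg
  have hLcont : ∀ z, a ≤ coherentDensity k Φ z →
      ContinuousAt (fun z => ‖coherentLogDeriv k Φ z‖) z :=
    fun z hz => (contDiffAt_coherentLogDeriv_of_le hΦ ha hz).continuousAt.norm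
  have hκcont : ∀ z, a ≤ coherentDensity k Φ z →
      ContinuousAt (fun z : ℂ => ‖(1 - z * conj z)⁻¹‖) z := fun z hz =>
    ((contDiff_one_sub_mul_conj (n := 0)).continuous.continuousAt.inv₀
      (one_sub_mul_conj_ne_zero (mem_ball_of_coherentDensity_pos (ha.trans_le hz)))).norm
  have hnorm : ∀ z, ‖dbar (fun w => (h (coherentDensity k Φ w) : ℂ)) z / (1 - z * conj z)‖ =
      θ z * ‖coherentLogDeriv k Φ z‖ * ‖(1 - z * conj z)⁻¹‖ := by
    intro z
    rw [div_eq_mul_inv, norm_mul, dbar_comp_coherentDensity hΦ ha hS hh hha, norm_mul,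
      norm_conj, norm_real, Real.norm_of_nonneg (hθ z)]
  have hvalue : ∫ z, θ z * ‖(1 - z * conj z)⁻¹‖ ^ 2 = Real.pi * ∫ z, θ z ∂hyperbolicMeasure := by
    rw [integral_hyperbolicMeasure (comp_coherentDensity_support_subset_ball ha
      (tsupport_mul_deriv_subset hha)), ← integral_const_mul]
    simp only [← hyperbolicDensity_eq_norm_inv_sq, smul_eq_mul, hθ_def]
    congr 1 with z
    ring
  have hint {φ : ℂ → ℝ} (hφ : ∀ z, a ≤ coherentDensity k Φ z → ContinuousAt φ z) :
      Integrable fun z => θ z * φ z :=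
    integrable_mul_deriv_coherentDensity_mul hΦ ha hS hh hha hφ
  simp only [hnorm]
  rw [← integral_norm_sq_coherentLogDeriv hΦ ha hS hh hha, ← hvalue]
  refine sq_integral_mul_mul_le hθ (hint fun z hz => (hLcont z hz).pow 2)
    (hint fun z hz => (hκcont z hz).pow 2) ?_
  simp only [mul_assoc (θ _)]
  exact hint fun z hz => (hLcont z hz).mul (hκcont z hz)

lemma one_add_mul_integral_comp_coherentDensity_le (hk : 0 ≤ k) :
    (1 + hyperbolicMeasure.real {z | a ≤ coherentDensity k Φ z}) *
        ∫ z, h (coherentDensity k Φ z) ∂hyperbolicMeasure ≤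
      2 * k * hyperbolicMeasure.real {z | a ≤ coherentDensity k Φ z} *
        ∫ z, coherentDensity k Φ z * deriv h (coherentDensity k Φ z) ∂hyperbolicMeasure := by
  have hhaC := tsupport_ofReal_subset hha
  have hsub := tsupport_comp_coherentDensity_subset (u := fun x => (h x : ℂ)) hS hhaC
  have hball : {z | a ≤ coherentDensity k Φ z} ⊆ ball 0 1 := fun _ hz =>
    mem_ball_of_coherentDensity_pos (ha.trans_le hz)
  have hiso := norm_integral_hyperbolicMeasure_le
    (contDiff_ofReal_comp_coherentDensity hΦ ha hS hh hha)
    (hasCompactSupport_comp_coherentDensity (u := fun x => (h x : ℂ)) hS hhaC) (hsub.trans hball)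
    (hyperbolicMeasure_lt_top_of_isCompact hS hball).ne ((subset_tsupport _).trans hsub)
  have hCS := sq_integral_norm_dbar_div_le hΦ ha hS hh hha hmono
  rw [integral_complex_ofReal, norm_real, Real.norm_eq_abs] at hiso
  set A := hyperbolicMeasure.real {z | a ≤ coherentDensity k Φ z}
  set G := ∫ z, h (coherentDensity k Φ z) ∂hyperbolicMeasure
  set T := ∫ z, coherentDensity k Φ z * deriv h (coherentDensity k Φ z) ∂hyperbolicMeasure
  have hA : 0 ≤ A := measureReal_nonneg
  have hT : 0 ≤ T :=
    integral_nonneg fun z => mul_nonneg (coherentDensity_nonneg z) hmono.deriv_nonneg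
  rcases le_or_gt G 0 with hG | hG
  · exact (mul_nonpos_of_nonneg_of_nonpos (by positivity) hG).trans (by positivity)
  · rw [abs_of_pos hG] at hiso
    have hfactor : 0 < Real.pi ^ 2 * (1 + A) * G := by positivity
    refine le_of_mul_le_mul_left ?_ hfactor
    calc Real.pi ^ 2 * (1 + A) * G * ((1 + A) * G) = (Real.pi * (1 + A) * G) ^ 2 := by ring
      _ ≤ (√(A + A ^ 2) * ∫ z, ‖dbar (fun w => (h (coherentDensity k Φ w) : ℂ)) z /
            (1 - z * conj z)‖) ^ 2 := by gcongr
      _ ≤ (A + A ^ 2) * ((2 * k * Real.pi * G) * (Real.pi * T)) := by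
          rw [mul_pow, Real.sq_sqrt (by positivity)]
          gcongr
      _ = Real.pi ^ 2 * (1 + A) * G * (2 * k * A * T) := by ring

end LevelSetInequality

lemma exists_contDiff_log_sub_log_le {a a' b' b : ℝ} (ha : 0 < a) (ha' : a < a') (hab : a' ≤ b')
    (hb : b' < b) :
    ∃ h : ℝ → ℝ, ContDiff ℝ 1 h ∧ Monotone h ∧ tsupport h ⊆ Set.Ici a ∧
      (∀ x, x * deriv h x ≤ 1) ∧ (∀ x, b ≤ x → deriv h x = 0) ∧
      Real.log b' - Real.log a' ≤ h b := by
  obtain ⟨η, hη0, hη1, hη⟩ := exists_continuous_zero_one_of_isClosed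
    (isOpen_Ioo (a := a) (b := b)).isClosed_compl (isClosed_Icc (a := a') (b := b'))
    (Set.disjoint_compl_left_iff_subset.2 (Set.Icc_subset_Ioo ha' hb))
  have hmax (x : ℝ) : 0 < max x a := ha.trans_le (le_max_right _ _)
  have hcont : Continuous fun x => η x / max x a :=
    η.continuous.div (continuous_id.max continuous_const) fun x => (hmax x).ne'
  have hnonneg (x : ℝ) : 0 ≤ η x / max x a := div_nonneg (hη x).1 (hmax x).le
  have hzero {x : ℝ} (hx : x ∉ Set.Ioo a b) : η x / max x a = 0 := by
    rw [hη0 hx, Pi.zero_apply, zero_div]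
  have hderiv (x : ℝ) : deriv (fun y => ∫ t in a..y, η t / max t a) x = η x / max x a :=
    hcont.deriv_integral _ _ _
  have hdiff : Differentiable ℝ fun y => ∫ t in a..y, η t / max t a := fun x =>
    (hcont.integral_hasStrictDerivAt a x).hasDerivAt.differentiableAt
  refine ⟨fun y => ∫ t in a..y, η t / max t a,
    contDiff_one_iff_deriv.2 ⟨hdiff, by simpa only [funext hderiv] using hcont⟩,
    monotone_of_deriv_nonneg hdiff fun x => (hderiv x).symm ▸ hnonneg x,
    closure_minimal (fun x hx => ?_) isClosed_Ici, fun x => ?_, fun x hx => ?_, ?_⟩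
  · by_contra hxa
    refine hx (intervalIntegral.integral_zero_ae (.of_forall fun t ht => hzero fun ht' => ?_))
    rw [Set.uIoc_of_ge (not_le.1 hxa).le] at ht
    exact ht.2.not_gt ht'.1
  · rw [hderiv, mul_div_assoc', div_le_one (hmax x)]
    calc x * η x ≤ max x a * η x := mul_le_mul_of_nonneg_right (le_max_left _ _) (hη x).1
      _ ≤ max x a := mul_le_of_le_one_right (hmax x).le (hη x).2
  · rw [hderiv, hzero fun hx' => hx'.2.not_ge hx]
  · have ha'0 := ha.trans ha'
    have hb'0 := ha'0.trans_le hab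
    rw [← Real.log_div hb'0.ne' ha'0.ne', ← integral_inv_of_pos ha'0 hb'0]
    calc ∫ x in a'..b', x⁻¹ = ∫ x in a'..b', η x / max x a := by
          refine intervalIntegral.integral_congr fun x hx => ?_
          rw [Set.uIcc_of_le hab] at hx
          simp only [hη1 hx, max_eq_left (ha'.le.trans hx.1), Pi.one_apply, one_div]
      _ ≤ ∫ x in a..b, η x / max x a :=
          intervalIntegral.integral_mono_interval ha'.le hab hb.le (.of_forall hnonneg)
            (hcont.intervalIntegrable _ _)

section LevelSetInequality

variable {k a b : ℝ} {Φ : ℂ → ℂ}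

lemma hyperbolicMeasure_setOf_le_coherentDensity_lt_top (ha : 0 < a)
    (hS : IsCompact {z | a ≤ coherentDensity k Φ z}) :
    hyperbolicMeasure {z | a ≤ coherentDensity k Φ z} < ⊤ :=
  hyperbolicMeasure_lt_top_of_isCompact hS fun _ hz =>
    mem_ball_of_coherentDensity_pos (ha.trans_le hz)

lemma integrable_comp_coherentDensity (hΦ : DifferentiableOn ℂ Φ (ball 0 1)) (ha : 0 < a)
    (hS : IsCompact {z | a ≤ coherentDensity k Φ z}) {u : ℝ → ℝ} (huc : Continuous u)
    (hu : tsupport u ⊆ Set.Ici a) :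
    Integrable (fun z => u (coherentDensity k Φ z)) hyperbolicMeasure :=
  integrable_hyperbolicMeasure_of_hasCompactSupport
    (contDiff_zero.1 (contDiff_comp_coherentDensity hΦ ha hS zero_le_one (contDiff_zero.2 huc) hu))
    (hasCompactSupport_comp_coherentDensity hS hu)
    ((tsupport_comp_coherentDensity_subset hS hu).trans fun _ hz =>
      mem_ball_of_coherentDensity_pos (ha.trans_le hz))

lemma mul_measureReal_le_integral_comp_coherentDensity (hΦ : DifferentiableOn ℂ Φ (ball 0 1))
    (ha : 0 < a) (hab : a ≤ b) (hS : IsCompact {z | a ≤ coherentDensity k Φ z})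
    (hSb : IsCompact {z | b ≤ coherentDensity k Φ z}) {h : ℝ → ℝ} (hh : Continuous h)
    (hha : tsupport h ⊆ Set.Ici a) (hmono : Monotone h) :
    h b * hyperbolicMeasure.real {z | b ≤ coherentDensity k Φ z} ≤
      ∫ z, h (coherentDensity k Φ z) ∂hyperbolicMeasure := by
  have hint := integrable_comp_coherentDensity hΦ ha hS hh hha
  have hnonneg (x : ℝ) : 0 ≤ h x := by
    by_cases hx : x ∈ tsupport h
    · rw [← image_eq_zero_of_notMem_tsupport fun h0 => (ha.trans_le (hha h0)).false]
      exact hmono (ha.trans_le (hha hx)).le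
    · exact (image_eq_zero_of_notMem_tsupport hx).ge
  calc h b * hyperbolicMeasure.real {z | b ≤ coherentDensity k Φ z}
      ≤ ∫ z in {z | b ≤ coherentDensity k Φ z}, h (coherentDensity k Φ z) ∂hyperbolicMeasure :=
        setIntegral_ge_of_const_le_real hSb.measurableSet
          (hyperbolicMeasure_setOf_le_coherentDensity_lt_top (ha.trans_le hab) hSb).ne
          (fun z hz => hmono hz) hint.integrableOn
    _ ≤ ∫ z, h (coherentDensity k Φ z) ∂hyperbolicMeasure :=
        setIntegral_le_integral hint (.of_forall fun z => hnonneg _)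

lemma integral_mul_deriv_coherentDensity_le (hΦ : DifferentiableOn ℂ Φ (ball 0 1)) (ha : 0 < a)
    (hab : a ≤ b) (hS : IsCompact {z | a ≤ coherentDensity k Φ z})
    (hSb : IsCompact {z | b ≤ coherentDensity k Φ z}) {h : ℝ → ℝ} (hh : ContDiff ℝ 1 h)
    (hha : tsupport h ⊆ Set.Ici a) (hle : ∀ x, x * deriv h x ≤ 1)
    (hb : ∀ x, b ≤ x → deriv h x = 0) :
    ∫ z, coherentDensity k Φ z * deriv h (coherentDensity k Φ z) ∂hyperbolicMeasure ≤
      hyperbolicMeasure.real {z | a ≤ coherentDensity k Φ z} -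
        hyperbolicMeasure.real {z | b ≤ coherentDensity k Φ z} := by
  have hfin := (hyperbolicMeasure_setOf_le_coherentDensity_lt_top ha hS).ne
  have hzero : ∀ z, z ∉ {z | a ≤ coherentDensity k Φ z} \ {z | b ≤ coherentDensity k Φ z} →
      coherentDensity k Φ z * deriv h (coherentDensity k Φ z) = 0 := by
    intro z hz
    by_cases hza : a ≤ coherentDensity k Φ z
    · rw [hb _ (not_not.1 fun hzb => hz ⟨hza, hzb⟩), mul_zero]
    · exact image_eq_zero_of_notMem_tsupport (f := fun x => x * deriv h x) fun hz' =>
        hza (tsupport_mul_deriv_subset hha hz')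
  have hsub : {z | b ≤ coherentDensity k Φ z} ⊆ {z | a ≤ coherentDensity k Φ z} :=
    fun _ hz => hab.trans hz
  rw [← measureReal_sdiff hsub hSb.measurableSet hfin,
    ← setIntegral_eq_integral_of_forall_compl_eq_zero hzero, ← mul_one (hyperbolicMeasure.real _),
    ← smul_eq_mul, ← setIntegral_const]
  exact setIntegral_mono (integrable_comp_coherentDensity (u := fun x => x * deriv h x) hΦ ha hS
    (continuous_id.mul (hh.continuous_deriv le_rfl))
    (tsupport_mul_deriv_subset hha)).integrableOn
    (integrableOn_const (measure_ne_top_of_subset Set.sdiff_subset hfin)) fun z => hle _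

lemma one_add_mul_log_sub_log_mul_le (hk : 0 ≤ k) (hΦ : DifferentiableOn ℂ Φ (ball 0 1))
    (ha : 0 < a) (hab : a < b) (hS : IsCompact {z | a ≤ coherentDensity k Φ z})
    (hSb : IsCompact {z | b ≤ coherentDensity k Φ z}) :
    (1 + hyperbolicMeasure.real {z | a ≤ coherentDensity k Φ z}) *
        ((Real.log b - Real.log a) * hyperbolicMeasure.real {z | b ≤ coherentDensity k Φ z}) ≤
      2 * k * hyperbolicMeasure.real {z | a ≤ coherentDensity k Φ z} *
        (hyperbolicMeasure.real {z | a ≤ coherentDensity k Φ z} -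
          hyperbolicMeasure.real {z | b ≤ coherentDensity k Φ z}) := by
  set A := hyperbolicMeasure.real {z | a ≤ coherentDensity k Φ z}
  set B := hyperbolicMeasure.real {z | b ≤ coherentDensity k Φ z}
  have : 0 ≤ A := measureReal_nonneg
  have hinner {a' b' : ℝ} (ha' : a < a') (hab' : a' ≤ b') (hb' : b' < b) :
      (1 + A) * ((Real.log b' - Real.log a') * B) ≤ 2 * k * A * (A - B) := by
    obtain ⟨h, hh, hmono, hha, hle, hhb, hlog⟩ := exists_contDiff_log_sub_log_le ha ha' hab' hb'
    calc (1 + A) * ((Real.log b' - Real.log a') * B) ≤ (1 + A) * (h b * B) := by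
          gcongr
      _ ≤ (1 + A) * ∫ z, h (coherentDensity k Φ z) ∂hyperbolicMeasure := by
          gcongr
          exact mul_measureReal_le_integral_comp_coherentDensity hΦ ha hab.le hS hSb
            hh.continuous hha hmono
      _ ≤ _ := one_add_mul_integral_comp_coherentDensity_le hΦ ha hS hh hha hmono hk
      _ ≤ _ := by
          gcongr
          exact integral_mul_deriv_coherentDensity_le hΦ ha hab.le hS hSb hh hha hle hhb
  have hlim : Filter.Tendsto (fun δ => (1 + A) * ((Real.log (b - δ) - Real.log (a + δ)) * B))
      (𝓝[>] 0) (𝓝 ((1 + A) * ((Real.log b - Real.log a) * B))) := by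
    have hb0 : b - 0 ≠ 0 := by linarith
    have ha0 : a + 0 ≠ 0 := by linarith
    have hcont : ContinuousAt
        (fun δ => (1 + A) * ((Real.log (b - δ) - Real.log (a + δ)) * B)) 0 := by
      fun_prop (disch := assumption)
    simpa only [sub_zero, add_zero] using hcont.tendsto.mono_left nhdsWithin_le_nhds
  refine le_of_tendsto hlim ?_
  filter_upwards [Ioo_mem_nhdsGT (half_pos (sub_pos.2 hab))] with δ hδ
  exact hinner (by linarith [hδ.1]) (by linarith [hδ.2]) (by linarith [hδ.1])

end LevelSetInequality

lemma antitoneOn_of_sub_le_mul_sq {F : ℝ → ℝ} {s : Set ℝ} (hs : s.OrdConnected) {C : ℝ}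
    (hF : ∀ x ∈ s, ∀ y ∈ s, x ≤ y → F y - F x ≤ C * (y - x) ^ 2) : AntitoneOn F s := by
  have hbisect : ∀ n : ℕ, ∀ x ∈ s, ∀ y ∈ s, x ≤ y → F y - F x ≤ (1 / 2) ^ n * C * (y - x) ^ 2 := by
    intro n
    induction n with
    | zero => simpa using hF
    | succ n ih =>
      intro x hx y hy hxy
      have hxm : x ≤ (x + y) / 2 := by linarith
      have hmy : (x + y) / 2 ≤ y := by linarith
      have hm : (x + y) / 2 ∈ s := hs.out hx hy ⟨hxm, hmy⟩
      calc F y - F x = (F y - F ((x + y) / 2)) + (F ((x + y) / 2) - F x) := by ring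
        _ ≤ (1 / 2) ^ n * C * (y - (x + y) / 2) ^ 2 + (1 / 2) ^ n * C * ((x + y) / 2 - x) ^ 2 :=
            add_le_add (ih _ hm _ hy hmy) (ih _ hx _ hm hxm)
        _ = (1 / 2) ^ (n + 1) * C * (y - x) ^ 2 := by ring
  intro x hx y hy hxy
  have hlim : Filter.Tendsto (fun n : ℕ => (1 / 2 : ℝ) ^ n * C * (y - x) ^ 2) Filter.atTop
      (𝓝 0) := by
    have := (tendsto_pow_atTop_nhds_zero_of_lt_one (r := (1 / 2 : ℝ)) (by norm_num)
      (by norm_num)).mul_const (C * (y - x) ^ 2)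
    simpa only [zero_mul, mul_assoc] using this
  exact sub_nonpos.1 (ge_of_tendsto' hlim fun n => hbisect n x hx y hy hxy)

lemma sub_mul_sq_le_sub_div_one_add {A B δ m : ℝ} (hm : 0 < m) (hmB : m ≤ B) (hBA : B ≤ A)
    (hδ : 0 ≤ δ) (h : (1 + A) * (δ * B) ≤ A * (A - B)) :
    δ - (1 + 1 / m) * δ ^ 2 ≤ (A - B) / (1 + A) := by
  have hB : 0 < B := hm.trans_le hmB
  have hA : 0 < A := hB.trans_le hBA
  have hmB' : 1 / B ≤ 1 / m := one_div_le_one_div_of_le hm hmB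
  rcases le_total (δ * (1 + B)) (A - B) with hlarge | hsmall
  · calc δ - (1 + 1 / m) * δ ^ 2 ≤ δ - δ ^ 2 := by
          nlinarith [mul_nonneg (one_div_pos.2 hm).le (sq_nonneg δ)]
      _ ≤ (A - B) / (1 + A) := by
          rw [le_div_iff₀ (by positivity)]
          rcases le_total δ 1 with h1 | h1
          · nlinarith [mul_le_mul_of_nonneg_left hlarge (sub_nonneg.2 h1), mul_nonneg hδ hδ]
          · nlinarith [mul_nonneg hδ (sub_nonneg.2 h1)]
  · have hδle : δ ≤ (A - B) / (1 + A) + (A - B) ^ 2 / ((1 + A) * B) := by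
      rw [div_add_div _ _ (by positivity) (by positivity), le_div_iff₀ (by positivity)]
      nlinarith [mul_le_mul_of_nonneg_left h (by positivity : 0 ≤ 1 + A)]
    have hquad : (A - B) ^ 2 / ((1 + A) * B) ≤ (1 + 1 / m) * δ ^ 2 :=
      calc (A - B) ^ 2 / ((1 + A) * B) ≤ (δ * (1 + B)) ^ 2 / ((1 + B) * B) := by
            have := sub_nonneg.2 hBA
            gcongr
        _ = (1 + 1 / B) * δ ^ 2 := by
            field_simp
            ring
        _ ≤ (1 + 1 / m) * δ ^ 2 := by gcongr
    linarith

lemma add_log_one_add_le_of_forall_lt {a : ℝ → ℝ} (ha : Antitone a)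
    (hstep : ∀ x y, x < y → (1 + a x) * ((y - x) * a y) ≤ a x * (a x - a y)) {x y : ℝ}
    (hxy : x ≤ y) (hy : 0 < a y) : y + Real.log (1 + a y) ≤ x + Real.log (1 + a x) := by
  refine antitoneOn_of_sub_le_mul_sq (F := fun s => s + Real.log (1 + a s)) (C := 1 + 1 / a y)
    Set.ordConnected_Iic (fun s _ t ht hst => ?_) hxy Set.self_mem_Iic hxy
  rcases hst.eq_or_lt with rfl | hlt
  · simp
  have hat : 0 < a t := hy.trans_le (ha ht)
  have has : 0 < a s := hat.trans_le (ha hst)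
  have hlog : (a s - a t) / (1 + a s) ≤ Real.log (1 + a s) - Real.log (1 + a t) :=
    calc (a s - a t) / (1 + a s) = 1 - ((1 + a s) / (1 + a t))⁻¹ := by
          rw [inv_div, one_sub_div (by positivity)]
          ring
      _ ≤ Real.log ((1 + a s) / (1 + a t)) := Real.one_sub_inv_le_log_of_pos (by positivity)
      _ = Real.log (1 + a s) - Real.log (1 + a t) := Real.log_div (by positivity) (by positivity)
  linarith [sub_mul_sq_le_sub_div_one_add hy (ha ht) (ha hst) (sub_nonneg.2 hst) (hstep s t hlt)]

section LevelSets

variable {k : ℝ} {Φ : ℂ → ℂ}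

lemma measureReal_setOf_le_coherentDensity_anti
    (hS : ∀ t, 0 < t → IsCompact {z | t ≤ coherentDensity k Φ z}) {a b : ℝ} (ha : 0 < a)
    (hab : a ≤ b) : hyperbolicMeasure.real {z | b ≤ coherentDensity k Φ z} ≤
      hyperbolicMeasure.real {z | a ≤ coherentDensity k Φ z} :=
  measureReal_mono (fun _ hz => hab.trans hz)
    (hyperbolicMeasure_setOf_le_coherentDensity_lt_top ha (hS a ha)).ne

theorem rpow_mul_one_add_measureReal_le (hk : 0 < k) (hΦ : DifferentiableOn ℂ Φ (ball 0 1))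
    (hS : ∀ t, 0 < t → IsCompact {z | t ≤ coherentDensity k Φ z}) {a b : ℝ} (ha : 0 < a)
    (hab : a ≤ b) (hb : 0 < hyperbolicMeasure.real {z | b ≤ coherentDensity k Φ z}) :
    b ^ (1 / (2 * k)) * (1 + hyperbolicMeasure.real {z | b ≤ coherentDensity k Φ z}) ≤
      a ^ (1 / (2 * k)) * (1 + hyperbolicMeasure.real {z | a ≤ coherentDensity k Φ z}) := by
  set A : ℝ → ℝ := fun s => hyperbolicMeasure.real
    {z | Real.exp (2 * k * s) ≤ coherentDensity k Φ z} with hA_def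
  have hA : Antitone A := fun s t hst => by
    have := mul_le_mul_of_nonneg_left hst (by positivity : 0 ≤ 2 * k)
    exact measureReal_setOf_le_coherentDensity_anti hS (Real.exp_pos _) (Real.exp_le_exp.2 this)
  have hstep (s t : ℝ) (hst : s < t) : (1 + A s) * ((t - s) * A t) ≤ A s * (A s - A t) := by
    have h2k : 0 < 2 * k := by positivity
    have hlevel := one_add_mul_log_sub_log_mul_le hk.le hΦ (Real.exp_pos (2 * k * s))
      (Real.exp_lt_exp.2 (mul_lt_mul_of_pos_left hst h2k)) (hS _ (Real.exp_pos _))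
      (hS _ (Real.exp_pos _))
    rw [Real.log_exp, Real.log_exp] at hlevel
    refine le_of_mul_le_mul_left ?_ h2k
    linear_combination hlevel
  have hAlog {t : ℝ} (ht : 0 < t) :
      A (1 / (2 * k) * Real.log t) = hyperbolicMeasure.real {z | t ≤ coherentDensity k Φ z} := by
    rw [hA_def]
    simp only
    rw [← mul_assoc, mul_one_div_cancel (by positivity), one_mul, Real.exp_log ht]
  have hb0 : 0 < b := ha.trans_le hab
  have hlog : 1 / (2 * k) * Real.log a ≤ 1 / (2 * k) * Real.log b := by gcongr
  have hsum := add_log_one_add_le_of_forall_lt hA hstep hlog (by rwa [hAlog hb0])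
  rw [hAlog ha, hAlog hb0] at hsum
  have hexp {t : ℝ} (ht : 0 < t) (x : ℝ) (hx : 0 ≤ x) :
      Real.exp (1 / (2 * k) * Real.log t + Real.log (1 + x)) = t ^ (1 / (2 * k)) * (1 + x) := by
    rw [Real.exp_add, Real.exp_log (by positivity), Real.rpow_def_of_pos ht, mul_comm (Real.log t)]
  rw [← hexp hb0 _ measureReal_nonneg, ← hexp ha _ measureReal_nonneg]
  exact Real.exp_le_exp.2 hsum

end LevelSets

/-- The distribution function `t ↦ ((T/t)^β - 1)₊` for which `t^β (1 + A t)` equals the constant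
`T^β` on `(0, T]`. For `β = 1/(2k)` it is the hyperbolic distribution function of `T |f|²` with
`f ζ = (1 - |ζ|²)^k`, the case of equality. -/
noncomputable def extremalDistribution (T β t : ℝ) : ℝ := max ((T / t) ^ β - 1) 0

section Distribution

variable {T β q : ℝ}

lemma extremalDistribution_nonneg (T β t : ℝ) : 0 ≤ extremalDistribution T β t := le_max_right _ _

lemma measurable_extremalDistribution (T β : ℝ) : Measurable (extremalDistribution T β) :=
  (((measurable_const.div measurable_id).pow_const β).sub_const 1).max measurable_const

lemma extremalDistribution_mul_rpow_eq_indicator (hT : 0 < T) (hβ : 0 < β) {t : ℝ} (ht : 0 < t) :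
    extremalDistribution T β t * t ^ (q - 1) =
      (Set.Ioc 0 T).indicator (fun t => T ^ β * t ^ (q - 1 - β) - t ^ (q - 1)) t := by
  rcases le_or_gt t T with htT | hTt
  · have h1 : 1 ≤ (T / t) ^ β := Real.one_le_rpow ((one_le_div ht).2 htT) hβ.le
    rw [Set.indicator_of_mem (Set.mem_Ioc.2 ⟨ht, htT⟩), extremalDistribution,
      max_eq_left (sub_nonneg.2 h1), Real.div_rpow hT.le ht.le, Real.rpow_sub ht (q - 1)]
    ring
  · have h1 : (T / t) ^ β ≤ 1 :=
      Real.rpow_le_one (by positivity) ((div_le_one ht).2 hTt.le) hβ.le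
    rw [Set.indicator_of_notMem fun h => h.2.not_gt hTt, extremalDistribution,
      max_eq_right (sub_nonpos.2 h1), zero_mul]

lemma lintegral_extremalDistribution_mul_rpow (hT : 0 < T) (hβ : 0 < β) (hq : β < q) :
    ENNReal.ofReal q * ∫⁻ t in Set.Ioi 0,
        ENNReal.ofReal (extremalDistribution T β t) * ENNReal.ofReal (t ^ (q - 1)) =
      ENNReal.ofReal (T ^ q * β / (q - β)) := by
  have hq0 : 0 < q := hβ.trans hq
  have hint : IntervalIntegrable (fun t : ℝ => T ^ β * t ^ (q - 1 - β)) volume 0 T :=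
    (intervalIntegral.intervalIntegrable_rpow' (by linarith)).const_mul _
  have hint' : IntervalIntegrable (fun t : ℝ => t ^ (q - 1)) volume 0 T :=
    intervalIntegral.intervalIntegrable_rpow' (by linarith)
  have hpos : ∀ t ∈ Set.Ioi (0 : ℝ), 0 ≤ extremalDistribution T β t * t ^ (q - 1) := fun t ht =>
    mul_nonneg (extremalDistribution_nonneg T β t) (Real.rpow_nonneg (le_of_lt ht) _)
  have hindicator : ∀ t ∈ Set.Ioi (0 : ℝ), extremalDistribution T β t * t ^ (q - 1) =
      (Set.Ioc 0 T).indicator (fun t => T ^ β * t ^ (q - 1 - β) - t ^ (q - 1)) t := fun t ht =>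
    extremalDistribution_mul_rpow_eq_indicator hT hβ ht
  have hIoc : Set.Ioc 0 T ⊆ Set.Ioi (0 : ℝ) := Set.Ioc_subset_Ioi_self
  have hIntegrable : IntegrableOn (fun t => extremalDistribution T β t * t ^ (q - 1))
      (Set.Ioi 0) :=
    IntegrableOn.congr_fun (((hint.sub hint').1.integrable_indicator
      measurableSet_Ioc).integrableOn) (fun t ht => (hindicator t ht).symm) measurableSet_Ioi
  simp only [← ENNReal.ofReal_mul (extremalDistribution_nonneg T β _)]
  rw [← ofReal_integral_eq_lintegral_ofReal hIntegrable
    (ae_restrict_of_forall_mem measurableSet_Ioi hpos), ← ENNReal.ofReal_mul hq0.le,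
    setIntegral_congr_fun measurableSet_Ioi hindicator, setIntegral_indicator measurableSet_Ioc,
    Set.inter_eq_right.2 hIoc, ← intervalIntegral.integral_of_le hT.le,
    intervalIntegral.integral_sub hint hint', intervalIntegral.integral_const_mul,
    integral_rpow (Or.inl (by linarith)), integral_rpow (Or.inl (by linarith)),
    show q - 1 - β + 1 = q - β by ring, sub_add_cancel, Real.zero_rpow (by linarith),
    Real.zero_rpow hq0.ne', Real.rpow_sub hT]
  have hTβ := (Real.rpow_pos_of_pos hT β).ne'
  have hqβ : q - β ≠ 0 := by linarith
  congr 1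
  field_simp
  ring

lemma exists_sub_mul_sub_extremalDistribution_nonpos {A : ℝ → ℝ} (hβ : 0 < β) (hA : ∀ t, 0 ≤ A t)
    (hmono : ∀ s t, 0 < s → s ≤ t → 0 < A t → t ^ β * (1 + A t) ≤ s ^ β * (1 + A s))
    (hT : 0 < T) :
    ∃ c, 0 ≤ c ∧ ∀ t, 0 < t → (t ^ β - c) * (A t - extremalDistribution T β t) ≤ 0 := by
  set S : Set ℝ := {u | ∃ t, 0 < t ∧ t ^ β = u ∧ 0 < A t ∧ T ^ β ≤ t ^ β * (1 + A t)}
  have hbdd : BddAbove S := by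
    refine ⟨1 + A 1, ?_⟩
    rintro _ ⟨t, ht, rfl, hAt, -⟩
    have hle : t ^ β ≤ t ^ β * (1 + A t) :=
      le_mul_of_one_le_right (Real.rpow_nonneg ht.le β) (by linarith)
    rcases le_total 1 t with h1 | h1
    · exact hle.trans (by simpa using hmono 1 t one_pos h1 hAt)
    · linarith [Real.rpow_le_one ht.le h1 hβ.le, hA 1]
  have hdiv (t : ℝ) (ht : 0 < t) : (T / t) ^ β * t ^ β = T ^ β := by
    rw [← Real.mul_rpow (by positivity) ht.le, div_mul_cancel₀ _ ht.ne']
  refine ⟨sSup S, Real.sSup_nonneg ?_, fun t ht => ?_⟩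
  · rintro _ ⟨t, ht, rfl, -⟩
    exact Real.rpow_nonneg ht.le β
  have htβ := Real.rpow_pos_of_pos ht β
  rcases le_or_gt (sSup S) (t ^ β) with hct | htc
  · rcases hct.eq_or_lt with heq | hlt
    · rw [heq, sub_self, zero_mul]
    refine mul_nonpos_of_nonneg_of_nonpos (sub_nonneg.2 hct) (sub_nonpos.2 ?_)
    by_contra! hE
    have hE' : (T / t) ^ β - 1 < A t := (le_max_left _ _).trans_lt hE
    have hmem : t ^ β ∈ S :=
      ⟨t, ht, rfl, (extremalDistribution_nonneg T β t).trans_lt hE, by nlinarith [hdiv t ht]⟩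
    exact (le_csSup hbdd hmem).not_gt hlt
  · have hne : S.Nonempty := by
      by_contra! hempty
      rw [hempty, Real.sSup_empty] at htc
      exact htβ.not_gt htc
    obtain ⟨_, ⟨s, hs, rfl, hAs, hTs⟩, hts⟩ := exists_lt_of_lt_csSup hne htc
    have hst : t ≤ s := ((Real.rpow_lt_rpow_iff ht.le hs.le hβ).1 hts).le
    have hTt : T ^ β ≤ t ^ β * (1 + A t) := hTs.trans (hmono t s ht hst hAs)
    refine mul_nonpos_of_nonpos_of_nonneg (sub_nonpos.2 htc.le) (sub_nonneg.2 (max_le ?_ (hA t)))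
    rw [← hdiv t ht, mul_comm] at hTt
    linarith [le_of_mul_le_mul_left hTt htβ]

lemma lintegral_mul_le_lintegral_mul_of_add_mul_le {α : Type*} [MeasurableSpace α] {μ : Measure α}
    {φ u v : α → ENNReal} {c : ENNReal} (hc : c ≠ ⊤) (hφ : AEMeasurable φ μ)
    (hv : AEMeasurable v μ) (h : ∀ᵐ x ∂μ, φ x * u x + c * v x ≤ φ x * v x + c * u x)
    (huv : ∫⁻ x, u x ∂μ = ∫⁻ x, v x ∂μ) (hfin : ∫⁻ x, v x ∂μ ≠ ⊤) :
    ∫⁻ x, φ x * u x ∂μ ≤ ∫⁻ x, φ x * v x ∂μ := by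
  have hle := lintegral_mono_ae h
  rw [lintegral_add_right' _ (hv.const_mul c),
    lintegral_add_left' (f := fun x => φ x * v x) (hφ.mul hv),
    lintegral_const_mul' c _ hc, lintegral_const_mul' c _ hc, huv] at hle
  exact ENNReal.le_of_add_le_add_right (ENNReal.mul_ne_top hc hfin) hle

lemma lintegral_mul_rpow_add_le_lintegral_extremalDistribution {A : ℝ → ℝ} (hβ : 0 < β)
    (hA : ∀ t, 0 ≤ A t)
    (hmono : ∀ s t, 0 < s → s ≤ t → 0 < A t → t ^ β * (1 + A t) ≤ s ^ β * (1 + A s))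
    (hT : 0 < T)
    (hAE : ∫⁻ t in Set.Ioi 0, ENNReal.ofReal (A t) * ENNReal.ofReal (t ^ (q - 1)) =
      ∫⁻ t in Set.Ioi 0, ENNReal.ofReal (extremalDistribution T β t) * ENNReal.ofReal (t ^ (q - 1)))
    (hfin : ∫⁻ t in Set.Ioi 0,
      ENNReal.ofReal (extremalDistribution T β t) * ENNReal.ofReal (t ^ (q - 1)) ≠ ⊤) :
    ∫⁻ t in Set.Ioi 0, ENNReal.ofReal (A t) * ENNReal.ofReal (t ^ (q + β - 1)) ≤
      ∫⁻ t in Set.Ioi 0,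
        ENNReal.ofReal (extremalDistribution T β t) * ENNReal.ofReal (t ^ (q + β - 1)) := by
  set E := extremalDistribution T β
  have hE := extremalDistribution_nonneg T β
  obtain ⟨c, hc, hcross⟩ := exists_sub_mul_sub_extremalDistribution_nonpos hβ hA hmono hT
  have hsplit (F : ℝ → ℝ) :
      ∫⁻ t in Set.Ioi 0, ENNReal.ofReal (F t) * ENNReal.ofReal (t ^ (q + β - 1)) =
        ∫⁻ t in Set.Ioi 0, ENNReal.ofReal (t ^ β) *
          (ENNReal.ofReal (F t) * ENNReal.ofReal (t ^ (q - 1))) :=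
    setLIntegral_congr_fun measurableSet_Ioi fun t ht => by
      rw [show q + β - 1 = β + (q - 1) by ring, Real.rpow_add ht,
        ENNReal.ofReal_mul (Real.rpow_nonneg (le_of_lt ht) β), mul_left_comm]
  have hpoint (t : ℝ) (ht : t ∈ Set.Ioi 0) :
      ENNReal.ofReal (t ^ β) * ENNReal.ofReal (A t) + ENNReal.ofReal c * ENNReal.ofReal (E t) ≤
      ENNReal.ofReal (t ^ β) * ENNReal.ofReal (E t) + ENNReal.ofReal c * ENNReal.ofReal (A t) := by
    have htβ : 0 ≤ t ^ β := Real.rpow_nonneg (le_of_lt ht) β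
    rw [← ENNReal.ofReal_mul htβ, ← ENNReal.ofReal_mul htβ, ← ENNReal.ofReal_mul hc,
      ← ENNReal.ofReal_mul hc,
      ← ENNReal.ofReal_add (mul_nonneg htβ (hA t)) (mul_nonneg hc (hE t)),
      ← ENNReal.ofReal_add (mul_nonneg htβ (hE t)) (mul_nonneg hc (hA t))]
    exact ENNReal.ofReal_le_ofReal (by linarith [hcross t ht])
  rw [hsplit A, hsplit E]
  refine lintegral_mul_le_lintegral_mul_of_add_mul_le (c := ENNReal.ofReal c)
    ENNReal.ofReal_ne_top (by fun_prop) ?_ ?_ hAE hfin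
  · exact ((measurable_extremalDistribution T β).ennreal_ofReal.mul (by fun_prop)).aemeasurable
  · refine ae_restrict_of_forall_mem measurableSet_Ioi fun t ht => ?_
    simpa only [add_mul, mul_assoc] using
      mul_le_mul_left (hpoint t ht) (ENNReal.ofReal (t ^ (q - 1)))

end Distribution

section Comparison

variable {α : Type*} [MeasurableSpace α] {μ : Measure α} {g : α → ℝ} {β q : ℝ}

theorem lintegral_rpow_add_le_of_lintegral_rpow_eq (hg : 0 ≤ᵐ[μ] g) (hgm : AEMeasurable g μ)
    (hβ : 0 < β) (hq : β < q) (hfin : ∀ t, 0 < t → μ {x | t ≤ g x} ≠ ⊤)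
    (hmono : ∀ s t, 0 < s → s ≤ t → 0 < μ.real {x | t ≤ g x} →
      t ^ β * (1 + μ.real {x | t ≤ g x}) ≤ s ^ β * (1 + μ.real {x | s ≤ g x}))
    {T : ℝ} (hT : 0 < T)
    (hTq : ∫⁻ x, ENNReal.ofReal (g x ^ q) ∂μ = ENNReal.ofReal (T ^ q * β / (q - β))) :
    ∫⁻ x, ENNReal.ofReal (g x ^ (q + β)) ∂μ ≤ ENNReal.ofReal (T ^ (q + β) * β / q) := by
  have hq0 : 0 < q := hβ.trans hq
  have hofq : ENNReal.ofReal q ≠ 0 := (ENNReal.ofReal_pos.2 hq0).ne'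
  have hlayer (r : ℝ) (hr : 0 < r) : ∫⁻ x, ENNReal.ofReal (g x ^ r) ∂μ = ENNReal.ofReal r *
      ∫⁻ t in Set.Ioi 0, ENNReal.ofReal (μ.real {x | t ≤ g x}) * ENNReal.ofReal (t ^ (r - 1)) := by
    rw [lintegral_rpow_eq_lintegral_meas_le_mul μ hg hgm hr]
    congr 1
    refine setLIntegral_congr_fun measurableSet_Ioi fun t ht => ?_
    simp only [ofReal_measureReal (hfin t ht)]
  have hE := lintegral_extremalDistribution_mul_rpow hT hβ hq
  have hEtop : ∫⁻ t in Set.Ioi 0, ENNReal.ofReal (extremalDistribution T β t) *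
      ENNReal.ofReal (t ^ (q - 1)) ≠ ⊤ := fun h => by
    rw [h, ENNReal.mul_top hofq] at hE
    exact ENNReal.ofReal_ne_top hE.symm
  rw [hlayer q hq0, ← hE, ENNReal.mul_right_inj hofq ENNReal.ofReal_ne_top] at hTq
  have hE' := lintegral_extremalDistribution_mul_rpow hT hβ (lt_add_of_pos_left β hq0)
  rw [add_sub_cancel_right] at hE'
  rw [hlayer (q + β) (by linarith), ← hE']
  exact mul_le_mul_right (lintegral_mul_rpow_add_le_lintegral_extremalDistribution hβ
    (fun _ => measureReal_nonneg) hmono hT hTq hEtop) _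

lemma lintegral_rpow_eq_zero_of_lintegral_rpow_eq_zero (hg : 0 ≤ᵐ[μ] g) (hgm : AEMeasurable g μ)
    (h : ∫⁻ x, ENNReal.ofReal (g x ^ q) ∂μ = 0) {r : ℝ} (hr : r ≠ 0) :
    ∫⁻ x, ENNReal.ofReal (g x ^ r) ∂μ = 0 := by
  rw [lintegral_eq_zero_iff' (hgm.pow_const q).ennreal_ofReal] at h
  rw [lintegral_eq_zero_iff' (hgm.pow_const r).ennreal_ofReal]
  filter_upwards [h, hg] with x hx hgx
  have hgx0 : g x = 0 := by
    by_contra hne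
    exact (ENNReal.ofReal_pos.2 (Real.rpow_pos_of_pos (hgx.lt_of_ne' hne) q)).ne' hx
  simp [hgx0, Real.zero_rpow hr]

theorem mul_lintegral_rpow_add_rpow_le (hg : 0 ≤ᵐ[μ] g) (hgm : AEMeasurable g μ)
    (hβ : 0 < β) (hq : β < q) (hfin : ∀ t, 0 < t → μ {x | t ≤ g x} ≠ ⊤)
    (hmono : ∀ s t, 0 < s → s ≤ t → 0 < μ.real {x | t ≤ g x} →
      t ^ β * (1 + μ.real {x | t ≤ g x}) ≤ s ^ β * (1 + μ.real {x | s ≤ g x})) :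
    (ENNReal.ofReal (q / β) * ∫⁻ x, ENNReal.ofReal (g x ^ (q + β)) ∂μ) ^ (q / (q + β)) ≤
      ENNReal.ofReal ((q - β) / β) * ∫⁻ x, ENNReal.ofReal (g x ^ q) ∂μ := by
  have hq0 : 0 < q := hβ.trans hq
  have hqβ : 0 < q - β := sub_pos.2 hq
  have hexp : 0 < q / (q + β) := by positivity
  set I := ∫⁻ x, ENNReal.ofReal (g x ^ q) ∂μ
  by_cases htop : I = ⊤
  · rw [htop, ENNReal.mul_top (ENNReal.ofReal_pos.2 (by positivity)).ne']
    exact le_top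
  by_cases hzero : I = 0
  · rw [lintegral_rpow_eq_zero_of_lintegral_rpow_eq_zero hg hgm hzero (by linarith), mul_zero,
      ENNReal.zero_rpow_of_pos hexp]
    exact zero_le
  have hIpos : 0 < I.toReal := ENNReal.toReal_pos hzero htop
  obtain ⟨T, hT, hTq⟩ : ∃ T : ℝ, 0 < T ∧ T ^ q = (q - β) / β * I.toReal :=
    ⟨((q - β) / β * I.toReal) ^ q⁻¹, by positivity, Real.rpow_inv_rpow (by positivity) hq0.ne'⟩
  have hIT : I = ENNReal.ofReal (T ^ q * β / (q - β)) := by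
    rw [hTq, show (q - β) / β * I.toReal * β / (q - β) = I.toReal by field_simp,
      ENNReal.ofReal_toReal htop]
  calc (ENNReal.ofReal (q / β) * ∫⁻ x, ENNReal.ofReal (g x ^ (q + β)) ∂μ) ^ (q / (q + β))
      ≤ (ENNReal.ofReal (q / β) * ENNReal.ofReal (T ^ (q + β) * β / q)) ^ (q / (q + β)) := by
        gcongr
        exact lintegral_rpow_add_le_of_lintegral_rpow_eq hg hgm hβ hq hfin hmono hT hIT
    _ = ENNReal.ofReal (T ^ (q + β)) ^ (q / (q + β)) := by
        rw [← ENNReal.ofReal_mul (by positivity)]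
        congr 2
        field_simp
    _ = ENNReal.ofReal (T ^ q) := by
        rw [ENNReal.ofReal_rpow_of_pos (by positivity), ← Real.rpow_mul hT.le,
          mul_div_cancel₀ _ (by linarith)]
    _ = ENNReal.ofReal ((q - β) / β) * I := by
        rw [hTq, ENNReal.ofReal_mul (by positivity), ENNReal.ofReal_toReal htop]

end Comparison

section NormEstimate

variable {k q : ℝ} {Φ : ℂ → ℂ}

theorem mul_lintegral_coherentDensity_rpow_add_rpow_le (hk : 0 < k) (hkq : 1 < 2 * k * q)
    (hΦ : DifferentiableOn ℂ Φ (ball 0 1))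
    (hint : Integrable (coherentDensity k Φ) hyperbolicMeasure) :
    (ENNReal.ofReal (2 * k * q) * ∫⁻ z, ENNReal.ofReal
        (coherentDensity k Φ z ^ (q + 1 / (2 * k))) ∂hyperbolicMeasure) ^
          (q / (q + 1 / (2 * k))) ≤
      ENNReal.ofReal (2 * k * q - 1) *
        ∫⁻ z, ENNReal.ofReal (coherentDensity k Φ z ^ q) ∂hyperbolicMeasure := by
  have h2k : 0 < 2 * k := by positivity
  have hS (t : ℝ) (ht : 0 < t) : IsCompact {z | t ≤ coherentDensity k Φ z} :=
    isCompact_setOf_le_coherentDensity hk.le hΦ hint ht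
  have hβq : 1 / (2 * k) < q := (div_lt_iff₀' h2k).2 hkq
  have hmain := mul_lintegral_rpow_add_rpow_le (μ := hyperbolicMeasure)
    (.of_forall coherentDensity_nonneg) hint.aemeasurable (by positivity) hβq
    (fun t ht => (hyperbolicMeasure_setOf_le_coherentDensity_lt_top ht (hS t ht)).ne)
    (fun s t hs hst => rpow_mul_one_add_measureReal_le hk hΦ hS hs hst)
  rwa [show q / (1 / (2 * k)) = 2 * k * q by field_simp,
    show (q - 1 / (2 * k)) / (1 / (2 * k)) = 2 * k * q - 1 by field_simp] at hmain

variable {f : ℂ → ℂ}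

lemma norm_sq_eq_coherentDensity (hf : ∀ ζ, f ζ = (((1 - ‖ζ‖ ^ 2) ^ k : ℝ) : ℂ) * Φ ζ) {z : ℂ}
    (hz : z ∈ ball (0 : ℂ) 1) : ‖f z‖ ^ 2 = coherentDensity k Φ z := by
  have hpos := one_sub_norm_sq_pos hz
  rw [coherentDensity_of_mem_ball hz, hf, norm_mul, mul_pow, Complex.norm_real,
    Real.norm_of_nonneg (Real.rpow_nonneg hpos.le k), ← Real.rpow_mul_natCast hpos.le,
    Nat.cast_ofNat, mul_comm k]

lemma lintegral_norm_rpow_eq (hf : ∀ ζ, f ζ = (((1 - ‖ζ‖ ^ 2) ^ k : ℝ) : ℂ) * Φ ζ) (r : ℝ) :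
    ∫⁻ ζ, ENNReal.ofReal (‖f ζ‖ ^ r) ∂hyperbolicMeasure =
      ∫⁻ ζ, ENNReal.ofReal (coherentDensity k Φ ζ ^ (r / 2)) ∂hyperbolicMeasure := by
  refine lintegral_congr_ae ?_
  filter_upwards [ae_hyperbolicMeasure_mem_ball] with z hz
  rw [← norm_sq_eq_coherentDensity hf hz, ← Real.rpow_natCast_mul (norm_nonneg _), Nat.cast_ofNat,
    mul_div_cancel₀ r two_ne_zero]

theorem mul_lintegral_norm_rpow_rpow_le {p : ℝ} (hk : 0 < k) (hkq : 1 < k * q)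
    (hp : p = q + 1 / k) (hΦ : DifferentiableOn ℂ Φ (ball (0 : ℂ) 1))
    (hf : ∀ ζ, f ζ = (((1 - ‖ζ‖ ^ 2) ^ k : ℝ) : ℂ) * Φ ζ)
    (hL2 : Integrable (fun ζ => ‖f ζ‖ ^ 2) hyperbolicMeasure) :
    (ENNReal.ofReal (k * q) * ∫⁻ ζ, ENNReal.ofReal (‖f ζ‖ ^ p) ∂hyperbolicMeasure) ^ (q / p) ≤
      ENNReal.ofReal (k * q - 1) *
        ∫⁻ ζ, ENNReal.ofReal (‖f ζ‖ ^ q) ∂hyperbolicMeasure := by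
  have hint : Integrable (coherentDensity k Φ) hyperbolicMeasure := hL2.congr <| by
    filter_upwards [ae_hyperbolicMeasure_mem_ball] with z hz using norm_sq_eq_coherentDensity hf hz
  have hkq' : 2 * k * (q / 2) = k * q := by ring
  have hp' : q / 2 + 1 / (2 * k) = p / 2 := by
    rw [hp]
    field_simp
  have hmain := mul_lintegral_coherentDensity_rpow_add_rpow_le hk (hkq.trans_eq hkq'.symm) hΦ hint
  rwa [hkq', hp', div_div_div_cancel_right₀ two_ne_zero, ← lintegral_norm_rpow_eq hf,
    ← lintegral_norm_rpow_eq hf] at hmain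

theorem coherent_state_norm_estimate_general
    (k q p : ℝ) (hk : 1 / 2 < k) (hkq : 1 < k * q) (hp : p = q + 1 / k)
    (Φ : ℂ → ℂ) (hΦ : DifferentiableOn ℂ Φ (ball (0 : ℂ) 1))
    (f : ℂ → ℂ) (hf : ∀ ζ, f ζ = (((1 - ‖ζ‖ ^ 2) ^ k : ℝ) : ℂ) * Φ ζ)
    (hL2 : Integrable (fun ζ => ‖f ζ‖ ^ 2) (nuMeasure k)) :
    ENNReal.ofReal ((2 * k - 1) / (k * q - 1) * ((k * p - 1) / (2 * k - 1)) ^ (q / p))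
        * (∫⁻ ζ, ENNReal.ofReal (‖f ζ‖ ^ p) ∂(nuMeasure k)) ^ (q / p)
      ≤ ∫⁻ ζ, ENNReal.ofReal (‖f ζ‖ ^ q) ∂(nuMeasure k) := by
  have hk0 : 0 < k := by linarith
  have h2k : 0 < 2 * k - 1 := by linarith
  have hkq1 : 0 < k * q - 1 := by linarith
  have hkq0 : 0 < k * q := by linarith
  have hq0 : 0 < q := pos_of_mul_pos_right hkq0 hk0.le
  have hqp : 0 ≤ q / p := by rw [hp]; positivity
  have hkp : k * p - 1 = k * q := by rw [hp]; field_simp; ring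
  have hν := nuMeasure_eq_smul_hyperbolicMeasure hk.le
  have hne : ENNReal.ofReal (2 * k - 1) ≠ 0 := (ENNReal.ofReal_pos.2 h2k).ne'
  rw [hν, integrable_smul_measure hne ENNReal.ofReal_ne_top] at hL2
  have hmain := mul_lintegral_norm_rpow_rpow_le hk0 hkq hp hΦ hf hL2
  rw [hν, lintegral_smul_measure, lintegral_smul_measure, smul_eq_mul, smul_eq_mul, hkp,
    ENNReal.ofReal_mul (by positivity), ← ENNReal.ofReal_rpow_of_nonneg (by positivity) hqp,
    mul_assoc, ← ENNReal.mul_rpow_of_nonneg _ _ hqp, ← mul_assoc,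
    ← ENNReal.ofReal_mul (by positivity), div_mul_cancel₀ _ h2k.ne']
  calc ENNReal.ofReal ((2 * k - 1) / (k * q - 1)) * (ENNReal.ofReal (k * q) *
        ∫⁻ ζ, ENNReal.ofReal (‖f ζ‖ ^ p) ∂hyperbolicMeasure) ^ (q / p)
      ≤ ENNReal.ofReal ((2 * k - 1) / (k * q - 1)) * (ENNReal.ofReal (k * q - 1) *
        ∫⁻ ζ, ENNReal.ofReal (‖f ζ‖ ^ q) ∂hyperbolicMeasure) := by gcongr
    _ = ENNReal.ofReal (2 * k - 1) *
        ∫⁻ ζ, ENNReal.ofReal (‖f ζ‖ ^ q) ∂hyperbolicMeasure := by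
        rw [← mul_assoc, ← ENNReal.ofReal_mul (by positivity), div_mul_cancel₀ _ hkq1.ne']

end NormEstimate

/-- Sharp norm estimate for SU(1,1) coherent state transforms (Corollary 3.3):
if `f(ζ) = (1−|ζ|²)^k Φ(ζ)` with `Φ` holomorphic on the disc and `f ∈ L²(ν_k)`,
then for `q ≥ 2`, `kq > 2` and `p = q + 1/k`,
`∫ |f|^q dν_k ≥ ((2k−1)/(kq−1))·((kp−1)/(2k−1))^{q/p}·(∫ |f|^p dν_k)^{q/p}`.
(The integrals are interpreted in `[0,∞]`.) -/
theorem coherent_state_norm_estimate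
    (k q p : ℝ) (hk : 1 / 2 < k) (hq : 2 ≤ q) (hkq : 2 < k * q)
    (hp : p = q + 1 / k)
    (Φ : ℂ → ℂ) (hΦ : DifferentiableOn ℂ Φ (ball (0 : ℂ) 1))
    (f : ℂ → ℂ) (hf : ∀ ζ, f ζ = (((1 - ‖ζ‖ ^ 2) ^ k : ℝ) : ℂ) * Φ ζ)
    (hL2 : Integrable (fun ζ => ‖f ζ‖ ^ 2) (nuMeasure k)) :
    ENNReal.ofReal ((2 * k - 1) / (k * q - 1) * ((k * p - 1) / (2 * k - 1)) ^ (q / p))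
        * (∫⁻ ζ, ENNReal.ofReal (‖f ζ‖ ^ p) ∂(nuMeasure k)) ^ (q / p)
      ≤ ∫⁻ ζ, ENNReal.ofReal (‖f ζ‖ ^ q) ∂(nuMeasure k) :=
  coherent_state_norm_estimate_general k q p hk (by linarith) hp Φ hΦ f hf hL2
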